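/- Let d ≥ 2 and k ≥ 1 be integers. A tree with boundary G has the Faber-Krahn property in the class T_d^{(·,k)} of all trees with boundary with exactly k interior vertices, each of degree at least d, if and only if G is an SLO*-tree in which every interior vertex has degree exactly d. Moreover G is then uniquely determined up to isomorphism. -/

import Mathlib

/-!
Common definitions for Faber-Krahn type inequalities for trees
(Bıyıkoğlu–Leydold, "Faber-Krahn Type Inequalities for Trees").

A *tree (graph) with boundary* is a finite simple connected graph in which
boundary vertices are exactly the vertices of degree 1 and interior vertices
are the vertices of degree ≥ 2; both sets are required to be nonempty.
The Dirichlet operator is the Laplacian restricted to functions vanishing on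
the boundary; `dirichletLambda` is its smallest eigenvalue.
-/

open Finset
open scoped Classical

noncomputable section

namespace FK

variable {V : Type*} [Fintype V] [DecidableEq V]

/-- A vertex is a boundary vertex iff it has degree `1`. -/
def IsBoundary (G : SimpleGraph V) (v : V) : Prop := G.degree v = 1

/-- A vertex is an interior vertex iff it has degree at least `2`. -/
def IsInterior (G : SimpleGraph V) (v : V) : Prop := 2 ≤ G.degree v

/-- A tree with boundary: a tree with at least one interior and
one boundary vertex. -/
def IsTreeWithBoundary (G : SimpleGraph V) : Prop :=
  G.IsTree ∧ (∃ v, IsInterior G v) ∧ (∃ v, IsBoundary G v)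

/-- A connected graph with boundary: every vertex is either a boundary vertex
(degree 1) or an interior vertex (degree ≥ 2), both kinds occur, and no edge
joins two boundary vertices. -/
def IsGraphWithBoundary (G : SimpleGraph V) : Prop :=
  G.Connected ∧ (∀ v, IsBoundary G v ∨ IsInterior G v) ∧
    (∃ v, IsInterior G v) ∧ (∃ v, IsBoundary G v) ∧
    (∀ v w, G.Adj v w → IsBoundary G v → ¬ IsBoundary G w)

/-- The finset of interior vertices. -/
def interiorFinset (G : SimpleGraph V) : Finset V := univ.filter (fun v => IsInterior G v)

/-- The finset of boundary vertices. -/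
def boundaryFinset (G : SimpleGraph V) : Finset V := univ.filter (fun v => IsBoundary G v)

/-- The degree sequence of `G`, as a multiset. -/
def degreeMultiset (G : SimpleGraph V) : Multiset ℕ := Finset.univ.val.map (fun v => G.degree v)

/-- The graph Laplacian `Δ = D - A` applied to a function `f : V → ℝ`. -/
def lapApply (G : SimpleGraph V) (f : V → ℝ) (v : V) : ℝ :=
  (G.degree v : ℝ) * f v - ∑ w ∈ G.neighborFinset v, f w

/-- `f` (vanishing on the boundary, nonzero) is an eigenfunction of the
Dirichlet operator `Δ₀` with eigenvalue `μ`: the eigenvalue equation holds at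
every interior vertex. -/
def IsDirichletEigenpair (G : SimpleGraph V) (μ : ℝ) (f : V → ℝ) : Prop :=
  f ≠ 0 ∧ (∀ v, IsBoundary G v → f v = 0) ∧
    ∀ v, IsInterior G v → lapApply G f v = μ * f v

/-- The first (smallest) Dirichlet eigenvalue `λ(G)`. -/
def dirichletLambda (G : SimpleGraph V) : ℝ :=
  sInf {μ : ℝ | ∃ f : V → ℝ, IsDirichletEigenpair G μ f}

/-- The quadratic form `⟨Δ f, f⟩ = Σ_{(u,v)∈E} (f u - f v)²` of the Laplacian
(each edge counted once). -/
def quadForm (G : SimpleGraph V) (f : V → ℝ) : ℝ :=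
  (∑ v, ∑ w ∈ G.neighborFinset v, (f v - f w) ^ 2) / 2

/-- The Rayleigh quotient `R_G(f)`. -/
def rayleigh (G : SimpleGraph V) (f : V → ℝ) : ℝ :=
  quadForm G f / ∑ v, f v ^ 2

/-- `w` is a child of `v` in the tree `G` rooted at `v₀`
(heights are distances from the root `v₀`). -/
def IsChild (G : SimpleGraph V) (v₀ v w : V) : Prop :=
  G.Adj v w ∧ G.dist v₀ w = G.dist v₀ v + 1

/-- A spiral-like ordering (SLO-ordering) of the vertices of the tree `G`
rooted at `v₀`: a (strict) well-ordering `lt` satisfying (S1)-(S3). -/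
def IsSLOOrdering (G : SimpleGraph V) (v₀ : V) (lt : V → V → Prop) : Prop :=
  IsStrictTotalOrder V lt ∧
  (∀ v w, lt v w → G.dist v₀ v ≤ G.dist v₀ w) ∧
  (∀ v₁ v₂ w₁ w₂, lt v₁ v₂ → IsChild G v₀ v₁ w₁ → IsChild G v₀ v₂ w₂ → lt w₁ w₂) ∧
  (∀ v w, lt v w → IsBoundary G v → IsBoundary G w)

/-- A spiral-like ordering with increasing degrees (SLO*-ordering):
additionally (S4). -/
def IsSLOStarOrdering (G : SimpleGraph V) (v₀ : V) (lt : V → V → Prop) : Prop :=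
  IsSLOOrdering G v₀ lt ∧
  ∀ v w, lt v w → IsInterior G v → IsInterior G w → G.degree v ≤ G.degree w

/-- An SLO-tree: a tree with boundary admitting an SLO-ordering. -/
def IsSLOTree (G : SimpleGraph V) : Prop :=
  IsTreeWithBoundary G ∧ ∃ (v₀ : V) (lt : V → V → Prop), IsSLOOrdering G v₀ lt

/-- An SLO*-tree: a tree with boundary admitting an SLO*-ordering. -/
def IsSLOStarTree (G : SimpleGraph V) : Prop :=
  IsTreeWithBoundary G ∧ ∃ (v₀ : V) (lt : V → V → Prop), IsSLOStarOrdering G v₀ lt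

end FK

namespace FK

/-- Membership in the class `T_d^(·,k)`: trees with boundary with exactly `k`
interior vertices, each of degree at least `d` (arbitrary total number of
vertices). -/
def inClassTdInterior (d k : ℕ) {V : Type*} [Fintype V] [DecidableEq V]
    (G : SimpleGraph V) : Prop :=
  IsTreeWithBoundary G ∧ (interiorFinset G).card = k ∧
    ∀ v, IsInterior G v → d ≤ G.degree v

/-- The Faber-Krahn property in `T_d^(·,k)` (the competitors range over all
finite trees with boundary with `k` interior vertices of degree ≥ `d`). -/
def hasFKTdInterior (d k : ℕ) {V : Type*} [Fintype V] [DecidableEq V]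
    (G : SimpleGraph V) : Prop :=
  inClassTdInterior d k G ∧
    ∀ (m : ℕ) (G' : SimpleGraph (Fin m)), inClassTdInterior d k G' →
      dirichletLambda G ≤ dirichletLambda G'

/-!
Sort the interior vertices of a tree `G` of the class by decreasing value of a positive first
Dirichlet eigenfunction, so that its values form a non-increasing sequence
`φ 0 ≥ φ 1 ≥ … ≥ φ (k - 1) > 0 = φ k = …`. Placing the same sequence on the greedy tree, the tree
filled breadth first with constant interior degree `d`, does not increase the Dirichlet energy: by a
discrete co-area formula the energy is a non-negative combination of the numbers of edges between a
superlevel set and a sublevel set, in a tree such a cut is bounded below by means of the degree sum,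
and the greedy tree attains the bound. As both vectors have the same norm, the Rayleigh quotient of
the greedy tree is at most `λ(G)`.

In the case of equality `φ` is an eigenfunction on both trees and every cut that enters with
positive weight is tight. Colouring the vertices by the value of `φ`, this forces all vertices of
the same colour, in either tree, to see the same numbers of neighbours of each colour, and two
trees with the same local colour statistics are isomorphic. Finally the axioms of a spiral-like
ordering determine the parent of every vertex once all interior degrees are `d`.
-/

/-! ### Rooted trees -/

/-- `par` is the parent map of the tree `G` rooted at `r`: the edges are the pairs `{u, par u}` with
`u ≠ r`, and some height function decreases from each vertex to its parent. The value `par r` is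
irrelevant. -/
structure IsParentMap {V : Type*} (G : SimpleGraph V) (r : V) (par : V → V) : Prop where
  adj_iff : ∀ u v, G.Adj u v ↔ (u ≠ r ∧ par u = v) ∨ (v ≠ r ∧ par v = u)
  exists_height : ∃ h : V → ℕ, ∀ u, u ≠ r → h (par u) < h u

theorem exists_adj_dist_eq_add_one {V : Type*} {G : SimpleGraph V} (hG : G.Connected) {r u : V}
    (hu : u ≠ r) : ∃ q, G.Adj u q ∧ G.dist r u = G.dist r q + 1 := by
  obtain ⟨p, hp⟩ := hG.exists_walk_length_eq_dist r u
  have hnil : ¬ p.Nil := SimpleGraph.Walk.not_nil_of_ne hu.symm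
  have hadj := p.adj_penultimate hnil
  refine ⟨p.penultimate, hadj.symm, le_antisymm ?_ ?_⟩
  · exact (hG.dist_triangle (v := p.penultimate)).trans_eq
      (congrArg _ (SimpleGraph.dist_eq_one_iff_adj.2 hadj))
  · rw [← hp, ← SimpleGraph.Walk.length_dropLast_add_one hnil]
    exact Nat.succ_le_succ (SimpleGraph.dist_le _)

theorem eq_of_adj_of_dist_eq_add_one {V : Type*} {G : SimpleGraph V} (hG : G.IsTree)
    {r u q w : V} (hq : G.Adj u q) (hw : G.Adj u w) (hqd : G.dist r u = G.dist r q + 1)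
    (hwd : G.dist r u = G.dist r w + 1) : q = w := by
  have geodesic : ∀ x, G.Adj u x → G.dist r u = G.dist r x + 1 →
      ∃ p : G.Path r u, p.1.penultimate = x := by
    intro x hx hxd
    obtain ⟨p, hp⟩ := hG.connected.exists_walk_length_eq_dist r x
    refine ⟨⟨p.concat hx.symm, SimpleGraph.Walk.isPath_of_length_eq_dist _ ?_⟩, by simp⟩
    rw [SimpleGraph.Walk.length_concat, hp, hxd]
  obtain ⟨p, rfl⟩ := geodesic q hq hqd
  obtain ⟨p', rfl⟩ := geodesic w hw hwd
  rw [(hG.isAcyclic.subsingleton_path r u).elim p p']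

theorem exists_isParentMap {V : Type*} {G : SimpleGraph V} (hG : G.IsTree) (r : V) :
    ∃ par : V → V, IsParentMap G r par ∧ ∀ u, u ≠ r → G.dist r u = G.dist r (par u) + 1 := by
  have hex : ∀ u, ∃ q, u ≠ r → G.Adj u q ∧ G.dist r u = G.dist r q + 1 := fun u => by
    by_cases hu : u = r
    · exact ⟨u, fun h => (h hu).elim⟩
    · exact (exists_adj_dist_eq_add_one hG.connected hu).imp fun _ hq _ => hq
  choose par hpar using hex
  have eq_par : ∀ u v, G.Adj u v → G.dist r u = G.dist r v + 1 → u ≠ r ∧ par u = v := by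
    intro u v h hd
    have hu : u ≠ r := by rintro rfl; simp at hd
    exact ⟨hu, eq_of_adj_of_dist_eq_add_one hG (hpar u hu).1 h (hpar u hu).2 hd⟩
  refine ⟨par, ⟨fun u v => ⟨fun h => ?_, ?_⟩, G.dist r, fun u hu => ?_⟩, fun u hu => (hpar u hu).2⟩
  · exact (hG.dist_eq_dist_add_one_of_adj r h).imp (eq_par u v h) (eq_par v u h.symm)
  · rintro (⟨hu, rfl⟩ | ⟨hv, rfl⟩)
    · exact (hpar u hu).1
    · exact (hpar v hv).1.symm
  · rw [(hpar u hu).2]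
    exact Nat.lt_succ_self _

namespace IsParentMap

section
variable {V : Type*} {G : SimpleGraph V} {r : V} {par : V → V}

theorem induction (R : IsParentMap G r par) {p : V → Prop} (root : p r)
    (step : ∀ u, u ≠ r → p (par u) → p u) (u : V) : p u := by
  obtain ⟨h, hh⟩ := R.exists_height
  induction hn : h u using Nat.strong_induction_on generalizing u with
  | _ n ih =>
    by_cases hu : u = r
    · exact hu ▸ root
    · exact step u hu (ih _ (hn ▸ hh u hu) _ rfl)

theorem adj_par (R : IsParentMap G r par) {u : V} (hu : u ≠ r) : G.Adj u (par u) :=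
  (R.adj_iff u (par u)).2 (Or.inl ⟨hu, rfl⟩)

theorem par_par_ne (R : IsParentMap G r par) {u : V} (hu : u ≠ r) (hpu : par u ≠ r) :
    par (par u) ≠ u := by
  obtain ⟨h, hh⟩ := R.exists_height
  intro heq
  have := (hh _ hpu).trans (hh u hu)
  rw [heq] at this
  exact this.false

theorem eq_par (R : IsParentMap G r par) {par' : V → V} (R' : IsParentMap G r par') {u : V}
    (hu : u ≠ r) : par u = par' u := by
  refine R.induction (p := fun u => u ≠ r → par u = par' u) (fun h => (h rfl).elim) ?_ u hu
  intro u hu ih _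
  rcases (R'.adj_iff _ _).1 (R.adj_par hu) with ⟨-, h⟩ | ⟨hpu, h⟩
  · exact h.symm
  · exact (R.par_par_ne hu hpu ((ih hpu).trans h)).elim

theorem dist_par (R : IsParentMap G r par) (hG : G.IsTree) {u : V} (hu : u ≠ r) :
    G.dist r u = G.dist r (par u) + 1 := by
  obtain ⟨par', R', hdist⟩ := exists_isParentMap hG r
  rw [R.eq_par R' hu]
  exact hdist u hu

theorem connected (R : IsParentMap G r par) : G.Connected :=
  have reachable_root : ∀ v, G.Reachable v r :=
    R.induction (SimpleGraph.Reachable.refl _) fun _ hu hr => (R.adj_par hu).reachable.trans hr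
  { preconnected := fun u v => (reachable_root u).trans (reachable_root v).symm
    nonempty := ⟨r⟩ }

theorem isTree [Finite V] (R : IsParentMap G r par) : G.IsTree := by
  have := Fintype.ofFinite V
  have card_edgeSet : Nat.card G.edgeSet = #G.edgeFinset := by
    rw [Nat.card_eq_fintype_card, SimpleGraph.edgeFinset_card]
  rw [SimpleGraph.isTree_iff_connected_and_card]
  refine ⟨R.connected, le_antisymm ?_ R.connected.card_vert_le_card_edgeSet_add_one⟩
  rw [card_edgeSet, Nat.card_eq_fintype_card]
  have hsub : G.edgeFinset ⊆ (univ.erase r).image fun c => s(c, par c) := by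
    intro e he
    induction e using Sym2.ind with
    | _ a b =>
      rw [SimpleGraph.mem_edgeFinset, SimpleGraph.mem_edgeSet, R.adj_iff] at he
      simp only [mem_image, mem_erase, mem_univ, and_true]
      rcases he with ⟨ha, rfl⟩ | ⟨hb, rfl⟩
      · exact ⟨a, ha, rfl⟩
      · exact ⟨b, hb, Sym2.eq_swap⟩
  calc #G.edgeFinset + 1 ≤ #(univ.erase r) + 1 := by
        gcongr; exact (card_le_card hsub).trans card_image_le
    _ = Fintype.card V := card_erase_add_one (mem_univ r)

theorem nonempty_iso (R : IsParentMap G r par) {W : Type*} {H : SimpleGraph W} {r' : W}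
    {par' : W → W} (R' : IsParentMap H r' par') {σ : W → V} (hσ : Function.Bijective σ)
    (root : σ r' = r) (map_par : ∀ w, w ≠ r' → par (σ w) = σ (par' w)) : Nonempty (G ≃g H) := by
  have key : ∀ a b, (σ a ≠ r ∧ par (σ a) = σ b) ↔ (a ≠ r' ∧ par' a = b) := by
    intro a b
    rw [← root, hσ.1.ne_iff]
    exact and_congr_right fun ha => by rw [map_par a ha, hσ.1.eq_iff]
  refine ⟨SimpleGraph.Iso.symm ⟨Equiv.ofBijective σ hσ, fun {a b} => ?_⟩⟩
  rw [R'.adj_iff, ← key, ← key]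
  exact R.adj_iff _ _

theorem card_interedges_add_two_le (R : IsParentMap G r par) {S T : Finset V} (hS : r ∈ S)
    (hT : r ∈ T) : #(G.interedges S T) + 2 ≤ #S + #T := by
  have hsub : G.interedges S T ⊆
      ((S.erase r).image fun v => (v, par v)) ∪ (T.erase r).image fun w => (par w, w) := by
    rintro ⟨v, w⟩ h
    obtain ⟨hv, hw, hvw⟩ := (SimpleGraph.mem_interedges_iff G).1 h
    simp only [mem_union, mem_image, mem_erase, Prod.mk.injEq]
    rcases (R.adj_iff v w).1 hvw with ⟨hvr, rfl⟩ | ⟨hwr, rfl⟩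
    · exact Or.inl ⟨v, ⟨hvr, hv⟩, rfl, rfl⟩
    · exact Or.inr ⟨w, ⟨hwr, hw⟩, rfl, rfl⟩
  have hcard : #(G.interedges S T) ≤ #(S.erase r) + #(T.erase r) :=
    (card_le_card hsub).trans
      ((card_union_le _ _).trans (Nat.add_le_add card_image_le card_image_le))
  have := card_erase_add_one hS
  have := card_erase_add_one hT
  omega

end

section
variable {V : Type*} [Fintype V] [DecidableEq V] {G : SimpleGraph V} {r : V} {par : V → V}

theorem sum_neighborFinset (R : IsParentMap G r par) {M : Type*} [AddCommMonoid M] (B : V → M)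
    (v : V) :
    ∑ w ∈ G.neighborFinset v, B w =
      (if v = r then 0 else B (par v)) + ∑ c with c ≠ r ∧ par c = v, B c := by
  have hdisj : Disjoint (univ.filter fun w => v ≠ r ∧ par v = w)
      (univ.filter fun c => c ≠ r ∧ par c = v) := by
    simp only [Finset.disjoint_left, mem_filter, mem_univ, true_and]
    rintro w ⟨hv, rfl⟩ ⟨hpv, h⟩
    exact R.par_par_ne hv hpv h
  have hset : G.neighborFinset v = (univ.filter fun w => v ≠ r ∧ par v = w) ∪
      (univ.filter fun c => c ≠ r ∧ par c = v) := by
    ext w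
    simp [R.adj_iff v w]
  rw [hset, sum_union hdisj, sum_filter]
  by_cases hv : v = r <;> simp [hv]

theorem degree_eq (R : IsParentMap G r par) (v : V) :
    G.degree v = (if v = r then 0 else 1) + #{c | c ≠ r ∧ par c = v} := by
  simpa using R.sum_neighborFinset (fun _ => (1 : ℕ)) v

theorem card_children_add_card (R : IsParentMap G r par) {S : Finset V}
    (hr : r ∈ S) : #{c | c ≠ r ∧ par c ∈ S} + #S = ∑ v ∈ S, G.degree v + 1 := by
  have card_children : #{c | c ≠ r ∧ par c ∈ S} = ∑ v ∈ S, #{c | c ≠ r ∧ par c = v} := by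
    rw [card_eq_sum_card_fiberwise (f := par) (t := S) fun c hc => (mem_filter.1 hc).2.2]
    refine sum_congr rfl fun v hv => congrArg card ?_
    ext c
    simp only [mem_filter, mem_univ, true_and]
    exact ⟨fun h => ⟨h.1.1, h.2⟩, fun h => ⟨⟨h.1, h.2 ▸ hv⟩, h.2⟩⟩
  have card_non_root : ∑ v ∈ S, (if v = r then 0 else 1) + 1 = #S := by
    rw [sum_ite, sum_const_zero, zero_add, ← card_eq_sum_ones, filter_ne', card_erase_add_one hr]
  simp_rw [R.degree_eq]
  rw [sum_add_distrib, card_children, ← card_non_root]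
  ring

end

end IsParentMap

/-! ### The form of the Laplacian -/

theorem card_interedges_eq_sum {V : Type*} (G : SimpleGraph V) (S T : Finset V) :
    #(G.interedges S T) = ∑ v ∈ S, #{w ∈ T | G.Adj v w} := by
  rw [SimpleGraph.interedges_def, card_filter, sum_product]
  simp only [card_filter]

section
variable {V : Type*} [Fintype V]

theorem lapApply_eq_mulVec (G : SimpleGraph V) (f : V → ℝ) :
    lapApply G f = (G.lapMatrix ℝ).mulVec f := by
  ext v
  rw [SimpleGraph.lapMatrix_mulVec_apply, lapApply]

theorem lapApply_sub_const (G : SimpleGraph V) (f : V → ℝ) (c : ℝ) :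
    lapApply G (fun v => f v - c) = lapApply G f := by
  ext v
  simp [lapApply, mul_sub]

theorem dotProduct_lapApply_comm (G : SimpleGraph V) (f g : V → ℝ) :
    f ⬝ᵥ lapApply G g = g ⬝ᵥ lapApply G f := by
  rw [lapApply_eq_mulVec, lapApply_eq_mulVec, Matrix.dotProduct_mulVec, ← Matrix.mulVec_transpose,
    (G.isSymm_lapMatrix (R := ℝ)).eq, dotProduct_comm]

theorem quadForm_eq_dotProduct (G : SimpleGraph V) (f : V → ℝ) :
    quadForm G f = f ⬝ᵥ lapApply G f := by
  rw [lapApply_eq_mulVec, ← Matrix.toLinearMap₂'_apply', SimpleGraph.lapMatrix_toLinearMap₂',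
    quadForm]
  simp_rw [← sum_filter, SimpleGraph.neighborFinset_eq_filter]

theorem quadForm_smul (G : SimpleGraph V) (c : ℝ) (f : V → ℝ) :
    quadForm G (c • f) = c ^ 2 * quadForm G f := by
  rw [quadForm_eq_dotProduct, quadForm_eq_dotProduct, lapApply_eq_mulVec, lapApply_eq_mulVec,
    Matrix.mulVec_smul, smul_dotProduct, dotProduct_smul, smul_smul, ← sq, smul_eq_mul]

theorem quadForm_add_smul (G : SimpleGraph V) (f g : V → ℝ) (t : ℝ) :
    quadForm G (f + t • g) =
      quadForm G f + 2 * t * (g ⬝ᵥ lapApply G f) + t ^ 2 * quadForm G g := by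
  have h := dotProduct_lapApply_comm G f g
  simp only [quadForm_eq_dotProduct, lapApply_eq_mulVec, Matrix.mulVec_add, Matrix.mulVec_smul,
    add_dotProduct, dotProduct_add, smul_dotProduct, dotProduct_smul, smul_eq_mul] at h ⊢
  rw [h]
  ring

theorem quadForm_abs_le (G : SimpleGraph V) (f : V → ℝ) : quadForm G |f| ≤ quadForm G f := by
  refine div_le_div_of_nonneg_right (sum_le_sum fun v _ => sum_le_sum fun w _ => ?_) zero_le_two
  exact sq_le_sq.2 (abs_abs_sub_abs_le (f v) (f w))

theorem indicator_dotProduct_lapApply_indicator [DecidableEq V] (G : SimpleGraph V)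
    {S T : Finset V} (h : S ⊆ T) :
    (fun v => if v ∈ S then (1 : ℝ) else 0) ⬝ᵥ lapApply G (fun v => if v ∈ T then 1 else 0) =
      #(G.interedges S Tᶜ) := by
  have lap_mem : ∀ v ∈ S, lapApply G (fun v => if v ∈ T then 1 else 0) v =
      #{w ∈ Tᶜ | G.Adj v w} := by
    intro v hv
    have hsplit := card_filter_add_card_filter_not (s := G.neighborFinset v) (· ∈ T)
    have hout : {w ∈ G.neighborFinset v | w ∉ T} = {w ∈ Tᶜ | G.Adj v w} := by
      ext w; simp [and_comm]
    rw [hout, SimpleGraph.card_neighborFinset_eq_degree] at hsplit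
    simp only [lapApply, h hv, ← hsplit, sum_boole]
    push_cast
    ring
  simp only [dotProduct, ite_mul, one_mul, zero_mul, sum_ite_mem, univ_inter]
  rw [sum_congr rfl lap_mem, card_interedges_eq_sum, Nat.cast_sum]

end

section
variable {n : ℕ}

/-- The number of edges of a graph on `Fin n` that cross both cuts `{v ≤ a}` and `{v ≤ b}`. -/
def cutSize (G : SimpleGraph (Fin n)) (a b : ℕ) : ℕ :=
  #(G.interedges {v | v.1 ≤ min a b} {v | max a b < v.1})

theorem cutSize_comm (G : SimpleGraph (Fin n)) (a b : ℕ) : cutSize G a b = cutSize G b a := by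
  rw [cutSize, cutSize, min_comm, max_comm]

theorem step_dotProduct_lapApply_step (G : SimpleGraph (Fin n)) (a b : ℕ) :
    (fun v : Fin n => if v.1 ≤ a then (1 : ℝ) else 0) ⬝ᵥ
      lapApply G (fun v => if v.1 ≤ b then 1 else 0) = cutSize G a b := by
  wlog hab : a ≤ b generalizing a b
  · rw [dotProduct_lapApply_comm, this b a (le_of_not_ge hab), cutSize_comm]
  have hsub : ({v | v.1 ≤ a} : Finset (Fin n)) ⊆ ({v | v.1 ≤ b} : Finset (Fin n)) :=
    fun v hv => by
    simp only [mem_filter, mem_univ, true_and] at hv ⊢; exact hv.trans hab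
  have hcompl : ({v | v.1 ≤ b} : Finset (Fin n))ᶜ = ({v | b < v.1} : Finset (Fin n)) := by
    ext v; simp
  have h := indicator_dotProduct_lapApply_indicator G hsub
  simp only [mem_filter, mem_univ, true_and] at h
  rw [h, hcompl, cutSize, min_eq_left hab, max_eq_right hab]

theorem eq_sum_diff_mul_step {φ : ℕ → ℝ} {k : ℕ} (hφ : ∀ i, k ≤ i → φ i = 0) (i : ℕ) :
    φ i = ∑ a ∈ range k, (φ a - φ (a + 1)) * (if i ≤ a then 1 else 0) := by
  simp only [mul_ite, mul_one, mul_zero]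
  rw [← sum_filter]
  rcases le_or_gt k i with hi | hi
  · rw [hφ i hi, filter_false_of_mem fun a ha => by have := mem_range.1 ha; omega, sum_empty]
  · have hIco : {a ∈ range k | i ≤ a} = Ico i k := by ext a; simp [and_comm]
    rw [hIco, sum_Ico_eq_sum_range]
    simp_rw [add_assoc]
    rw [sum_range_sub' fun j => φ (i + j), add_zero,
      hφ (i + (k - i)) (by omega), sub_zero]

/-- A discrete co-area formula. -/
theorem dotProduct_lapApply_eq_sum_cutSize (G : SimpleGraph (Fin n)) {φ ψ : ℕ → ℝ} {k : ℕ}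
    (hφ : ∀ i, k ≤ i → φ i = 0) (hψ : ∀ i, k ≤ i → ψ i = 0) :
    (fun v : Fin n => φ v) ⬝ᵥ lapApply G (fun v => ψ v) =
      ∑ a ∈ range k, ∑ b ∈ range k,
        (φ a - φ (a + 1)) * (ψ b - ψ (b + 1)) * cutSize G a b := by
  have expand : ∀ {χ : ℕ → ℝ}, (∀ i, k ≤ i → χ i = 0) → (fun v : Fin n => χ v) =
      ∑ a ∈ range k, (χ a - χ (a + 1)) • fun v : Fin n => if v.1 ≤ a then (1 : ℝ) else 0 := by
    intro χ hχ
    ext v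
    rw [eq_sum_diff_mul_step hχ v.1, Finset.sum_apply]
    rfl
  rw [lapApply_eq_mulVec, expand hφ, expand hψ, Matrix.mulVec_sum, sum_dotProduct]
  refine sum_congr rfl fun a _ => ?_
  rw [dotProduct_sum]
  refine sum_congr rfl fun b _ => ?_
  rw [Matrix.mulVec_smul, smul_dotProduct, dotProduct_smul, ← lapApply_eq_mulVec,
    step_dotProduct_lapApply_step, smul_eq_mul, smul_eq_mul, mul_assoc]

end

/-! ### The first Dirichlet eigenvalue -/

section
variable {V : Type*} [Fintype V] {G : SimpleGraph V}

theorem IsInterior.not_isBoundary {v : V} (hv : IsInterior G v) : ¬ IsBoundary G v := by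
  unfold IsInterior at hv
  unfold IsBoundary
  omega

/-- The domain of the Dirichlet form: the functions vanishing on the boundary. -/
def dirichletSpace (G : SimpleGraph V) : Submodule ℝ (V → ℝ) where
  carrier := {g | ∀ v, IsBoundary G v → g v = 0}
  add_mem' hf hg v hv := by simp [hf v hv, hg v hv]
  zero_mem' _ _ := rfl
  smul_mem' c g hg v hv := by simp [hg v hv]

theorem single_mem_dirichletSpace {v : V} (hv : IsInterior G v) (c : ℝ) :
    Pi.single v c ∈ dirichletSpace G := by
  intro w hw
  have hne : w ≠ v := by
    rintro rfl
    exact hv.not_isBoundary hw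
  exact Pi.single_eq_of_ne hne _

theorem isCompact_unit_dirichletSpace (G : SimpleGraph V) :
    IsCompact {g | g ∈ dirichletSpace G ∧ g ⬝ᵥ g = 1} := by
  refine (isCompact_univ_pi fun _ : V => isCompact_Icc (a := (-1 : ℝ)) (b := 1)).of_isClosed_subset
    ?_ fun g hg v _ => ?_
  · exact (dirichletSpace G).closed_of_finiteDimensional.inter
      (isClosed_eq (by unfold dotProduct; fun_prop) continuous_const)
  · have : g v * g v ≤ g ⬝ᵥ g :=
      single_le_sum (f := fun v => g v * g v) (fun _ _ => mul_self_nonneg _) (mem_univ v)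
    exact abs_le.1 (abs_le_one_iff_mul_self_le_one.2 (this.trans_eq hg.2))

theorem exists_unit_quadForm_minimizer (hG : ∃ v, IsInterior G v) :
    ∃ f ∈ dirichletSpace G, f ⬝ᵥ f = 1 ∧
      ∀ g ∈ dirichletSpace G, quadForm G f * (g ⬝ᵥ g) ≤ quadForm G g := by
  obtain ⟨v, hv⟩ := hG
  have hcont : Continuous (quadForm G) := by unfold quadForm; fun_prop
  obtain ⟨f, ⟨hf, hf1⟩, hmin⟩ := (isCompact_unit_dirichletSpace G).exists_isMinOn
    ⟨Pi.single v 1, single_mem_dirichletSpace hv 1, by simp⟩ hcont.continuousOn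
  refine ⟨f, hf, hf1, fun g hg => ?_⟩
  rcases eq_or_ne g 0 with rfl | hg0
  · simp [quadForm]
  have hpos : 0 < g ⬝ᵥ g := Matrix.dotProduct_self_star_pos_iff.2 hg0
  have hsq : (√(g ⬝ᵥ g))⁻¹ ^ 2 = (g ⬝ᵥ g)⁻¹ := by rw [inv_pow, Real.sq_sqrt hpos.le]
  have hnormalized : quadForm G f ≤ quadForm G ((√(g ⬝ᵥ g))⁻¹ • g) := by
    refine hmin ⟨(dirichletSpace G).smul_mem _ hg, ?_⟩
    rw [smul_dotProduct, dotProduct_smul, smul_smul, ← sq, hsq, smul_eq_mul,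
      inv_mul_cancel₀ hpos.ne']
  rwa [quadForm_smul, hsq, inv_mul_eq_div, le_div_iff₀ hpos] at hnormalized

theorem lapApply_eq_of_quadForm_le {μ : ℝ}
    (hμ : ∀ g ∈ dirichletSpace G, μ * (g ⬝ᵥ g) ≤ quadForm G g) {f : V → ℝ}
    (hf : f ∈ dirichletSpace G) (hle : quadForm G f ≤ μ * (f ⬝ᵥ f)) {v : V}
    (hv : IsInterior G v) : lapApply G f v = μ * f v := by
  have first_variation : ∀ t : ℝ, 0 ≤ (quadForm G (Pi.single v 1) - μ) * (t * t) +
      2 * (lapApply G f v - μ * f v) * t + 0 := by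
    intro t
    have h := hμ _ ((dirichletSpace G).add_mem hf
      ((dirichletSpace G).smul_mem t (single_mem_dirichletSpace hv 1)))
    have hsq : (f + t • Pi.single v 1) ⬝ᵥ (f + t • Pi.single v 1) =
        f ⬝ᵥ f + 2 * t * f v + t ^ 2 := by
      simp only [add_dotProduct, dotProduct_add, smul_dotProduct, dotProduct_smul, smul_eq_mul,
        single_one_dotProduct, dotProduct_single_one, Pi.add_apply, Pi.smul_apply,
        Pi.single_eq_same]
      ring
    rw [quadForm_add_smul, hsq, single_one_dotProduct] at h
    linarith
  have hdiscrim := discrim_le_zero first_variation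
  rw [discrim, mul_zero, sub_zero] at hdiscrim
  linarith [pow_eq_zero_iff two_ne_zero |>.1 (le_antisymm hdiscrim (sq_nonneg _))]

theorem IsDirichletEigenpair.quadForm_eq (hG : ∀ v, IsBoundary G v ∨ IsInterior G v) {μ : ℝ}
    {f : V → ℝ} (hf : IsDirichletEigenpair G μ f) : quadForm G f = μ * (f ⬝ᵥ f) := by
  rw [quadForm_eq_dotProduct, dotProduct, dotProduct, mul_sum]
  refine sum_congr rfl fun v _ => ?_
  rcases hG v with hv | hv
  · simp [hf.2.1 v hv]
  · rw [hf.2.2 v hv]; ring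

theorem isDirichletEigenpair_of_quadForm_le {μ : ℝ}
    (hμ : ∀ g ∈ dirichletSpace G, μ * (g ⬝ᵥ g) ≤ quadForm G g) {f : V → ℝ} (hf0 : f ≠ 0)
    (hf : f ∈ dirichletSpace G) (hle : quadForm G f ≤ μ * (f ⬝ᵥ f)) :
    IsDirichletEigenpair G μ f :=
  ⟨hf0, hf, fun _ hv => lapApply_eq_of_quadForm_le hμ hf hle hv⟩

theorem dirichletLambda_eq_of_isDirichletEigenpair (hG : ∀ v, IsBoundary G v ∨ IsInterior G v)
    {μ : ℝ} (hμ : ∀ g ∈ dirichletSpace G, μ * (g ⬝ᵥ g) ≤ quadForm G g) {f : V → ℝ}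
    (hf : IsDirichletEigenpair G μ f) : dirichletLambda G = μ := by
  refine IsLeast.csInf_eq ⟨⟨f, hf⟩, ?_⟩
  rintro ν ⟨g, hg⟩
  have hle := hμ g hg.2.1
  rw [hg.quadForm_eq hG] at hle
  exact le_of_mul_le_mul_right hle (Matrix.dotProduct_self_star_pos_iff.2 hg.1)

theorem exists_nonneg_first_eigenfunction (hG : ∀ v, IsBoundary G v ∨ IsInterior G v)
    (hint : ∃ v, IsInterior G v) :
    (∀ g ∈ dirichletSpace G, dirichletLambda G * (g ⬝ᵥ g) ≤ quadForm G g) ∧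
      ∃ f, 0 ≤ f ∧ IsDirichletEigenpair G (dirichletLambda G) f := by
  obtain ⟨f, hf, hf1, hmin⟩ := exists_unit_quadForm_minimizer hint
  have habs1 : |f| ⬝ᵥ |f| = 1 := by
    rw [← hf1]
    exact sum_congr rfl fun v _ => abs_mul_abs_self (f v)
  have habs : IsDirichletEigenpair G (quadForm G f) |f| := by
    refine isDirichletEigenpair_of_quadForm_le hmin ?_ (fun v hv => by simp [hf v hv]) ?_
    · rintro h0
      simp [h0] at habs1
    · rw [habs1, mul_one]
      exact quadForm_abs_le G f
  rw [dirichletLambda_eq_of_isDirichletEigenpair hG hmin habs]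
  exact ⟨hmin, |f|, abs_nonneg f, habs⟩

/-- A nonnegative eigenfunction that vanishes at an interior vertex vanishes at all its neighbours;
a boundary vertex shares its only neighbour, so this spreads over the whole graph. -/
theorem IsDirichletEigenpair.pos_of_nonneg (hG : G.Connected) {μ : ℝ} {f : V → ℝ}
    (hf : IsDirichletEigenpair G μ f) (hf0 : 0 ≤ f) {v : V} (hv : IsInterior G v) : 0 < f v := by
  by_contra hfv
  set Z : V → Prop := fun u => f u = 0 ∧ ∀ w, G.Adj u w → f w = 0
  have mem_of_isInterior : ∀ u, IsInterior G u → f u = 0 → Z u := by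
    intro u hu hfu
    have hsum := hf.2.2 u hu
    rw [lapApply, hfu, mul_zero, mul_zero, zero_sub, neg_eq_zero,
      sum_eq_zero_iff_of_nonneg fun w _ => hf0 w] at hsum
    exact ⟨hfu, fun w hw => hsum w ((G.mem_neighborFinset u w).2 hw)⟩
  have mem_of_adj : ∀ u w, G.Adj u w → Z u → Z w := by
    intro u w huw hu
    have hfw := hu.2 w huw
    rcases Nat.lt_or_ge (G.degree w) 2 with hw | hw
    · refine ⟨hfw, fun x hx => ?_⟩
      have hcard : #(G.neighborFinset w) ≤ 1 := by
        rw [SimpleGraph.card_neighborFinset_eq_degree]; omega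
      rw [card_le_one.1 hcard x (by simpa using hx) u (by simpa using huw.symm)]
      exact hu.1
    · exact mem_of_isInterior w hw hfw
  have hZ : ∀ w, Z w := fun w => by
    have hreach := (SimpleGraph.reachable_iff_reflTransGen v w).1 (hG.preconnected v w)
    induction hreach with
    | refl => exact mem_of_isInterior v hv (le_antisymm (not_lt.1 hfv) (hf0 v))
    | tail _ hadj ih => exact mem_of_adj _ _ hadj ih
  exact hf.1 (funext fun w => (hZ w).1)

theorem IsTreeWithBoundary.isBoundary_or_isInterior (hG : IsTreeWithBoundary G) (v : V) :
    IsBoundary G v ∨ IsInterior G v := by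
  obtain ⟨⟨hconn, -⟩, ⟨u, hu⟩, w, hw⟩ := hG
  have : Nontrivial V := ⟨u, w, fun h => hu.not_isBoundary (h ▸ hw)⟩
  have := hconn.preconnected.degree_pos_of_nontrivial v
  unfold IsBoundary IsInterior
  omega

end

/-! ### Invariance under isomorphism -/

theorem dist_map_le {V W : Type*} {G : SimpleGraph V} {H : SimpleGraph W} (hG : G.Connected)
    (φ : G →g H) (u v : V) : H.dist (φ u) (φ v) ≤ G.dist u v := by
  obtain ⟨p, hp⟩ := hG.exists_walk_length_eq_dist u v
  rw [← hp, ← SimpleGraph.Walk.length_map φ p]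
  exact SimpleGraph.dist_le _

theorem dist_iso {V W : Type*} {G : SimpleGraph V} {H : SimpleGraph W} (hG : G.Connected)
    (e : G ≃g H) (u v : V) : H.dist (e u) (e v) = G.dist u v :=
  le_antisymm (dist_map_le hG e.toHom u v) <| by
    simpa using dist_map_le (e.connected_iff.1 hG) e.symm.toHom (e u) (e v)

section
variable {V W : Type*} [Fintype V] [Fintype W] {G : SimpleGraph V} {H : SimpleGraph W}

theorem sum_neighborFinset_iso {M : Type*} [AddCommMonoid M] (e : G ≃g H) (B : W → M) (v : V) :
    ∑ w ∈ H.neighborFinset (e v), B w = ∑ w ∈ G.neighborFinset v, B (e w) := by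
  refine (sum_equiv e.toEquiv (fun w => ?_) fun _ _ => rfl).symm
  simp only [SimpleGraph.mem_neighborFinset]
  exact e.map_rel_iff.symm

theorem isBoundary_iso_iff (e : G ≃g H) (v : V) : IsBoundary H (e v) ↔ IsBoundary G v := by
  unfold IsBoundary
  rw [e.degree_eq]

theorem isInterior_iso_iff (e : G ≃g H) (v : V) : IsInterior H (e v) ↔ IsInterior G v := by
  unfold IsInterior
  rw [e.degree_eq]

theorem IsDirichletEigenpair.comp_iso (e : G ≃g H) {μ : ℝ} {f : W → ℝ}
    (hf : IsDirichletEigenpair H μ f) : IsDirichletEigenpair G μ (f ∘ e) := by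
  refine ⟨fun h => hf.1 ?_, fun v hv => hf.2.1 _ ((isBoundary_iso_iff e v).2 hv), fun v hv => ?_⟩
  · ext w
    simpa using congrFun h (e.symm w)
  · have := hf.2.2 (e v) ((isInterior_iso_iff e v).2 hv)
    rwa [lapApply, e.degree_eq, sum_neighborFinset_iso] at this

theorem dirichletLambda_iso (e : G ≃g H) : dirichletLambda G = dirichletLambda H := by
  unfold dirichletLambda
  congr 1
  ext μ
  exact ⟨fun ⟨_, hf⟩ => ⟨_, hf.comp_iso e.symm⟩, fun ⟨_, hf⟩ => ⟨_, hf.comp_iso e⟩⟩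

theorem IsTreeWithBoundary.of_iso (e : G ≃g H) (hG : IsTreeWithBoundary G) :
    IsTreeWithBoundary H := by
  obtain ⟨htree, ⟨u, hu⟩, v, hv⟩ := hG
  exact ⟨e.isTree_iff.1 htree, ⟨e u, (isInterior_iso_iff e u).2 hu⟩,
    e v, (isBoundary_iso_iff e v).2 hv⟩

theorem inClassTdInterior_of_iso [DecidableEq V] [DecidableEq W] {d k : ℕ} (e : G ≃g H)
    (hG : inClassTdInterior d k G) : inClassTdInterior d k H := by
  obtain ⟨htree, hcard, hdeg⟩ := hG
  refine ⟨htree.of_iso e, ?_, fun w hw => ?_⟩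
  · rw [← hcard]
    refine (card_equiv e.toEquiv fun v => ?_).symm
    simp only [interiorFinset, mem_filter, mem_univ, true_and]
    exact (isInterior_iso_iff e v).symm
  · rw [← e.symm.degree_eq]
    exact hdeg _ ((isInterior_iso_iff e.symm w).2 hw)

theorem IsSLOStarOrdering.comp_iso (hG : G.Connected) (e : G ≃g H) {w₀ : W}
    {lt : W → W → Prop} (hH : IsSLOStarOrdering H w₀ lt) :
    IsSLOStarOrdering G (e.symm w₀) fun a b => lt (e a) (e b) := by
  obtain ⟨⟨hlt, hdist, hchild, hbdry⟩, hdeg⟩ := hH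
  have dist_eq : ∀ v, G.dist (e.symm w₀) v = H.dist w₀ (e v) := fun v => by
    rw [← dist_iso hG e, e.apply_symm_apply]
  have isChild_iff : ∀ v w, IsChild G (e.symm w₀) v w ↔ IsChild H w₀ (e v) (e w) := fun v w => by
    rw [IsChild, IsChild, dist_eq, dist_eq]
    exact and_congr_left' e.map_rel_iff.symm
  refine ⟨⟨?_, fun v w h => ?_, fun v₁ v₂ w₁ w₂ h h₁ h₂ => ?_, fun v w h hv => ?_⟩,
    fun v w h hv hw => ?_⟩
  · exact RelEmbedding.isStrictTotalOrder (s := lt)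
      (⟨e.toEquiv.toEmbedding, Iff.rfl⟩ : (fun a b => lt (e a) (e b)) ↪r lt)
  · rw [dist_eq, dist_eq]
    exact hdist _ _ h
  · exact hchild _ _ _ _ h ((isChild_iff _ _).1 h₁) ((isChild_iff _ _).1 h₂)
  · exact (isBoundary_iso_iff e w).1 (hbdry _ _ h ((isBoundary_iso_iff e v).2 hv))
  · rw [← e.degree_eq, ← e.degree_eq]
    exact hdeg _ _ h ((isInterior_iso_iff e v).2 hv) ((isInterior_iso_iff e w).2 hw)

end

/-! ### The greedy `d`-regular tree -/

namespace IsParentMap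

variable {V : Type*} {G : SimpleGraph V} {r : V} {par : V → V}

theorem isChild_iff (R : IsParentMap G r par) (hG : G.IsTree) {v w : V} :
    IsChild G r v w ↔ w ≠ r ∧ par w = v := by
  refine ⟨fun ⟨hvw, hdist⟩ => ?_, ?_⟩
  · rcases (R.adj_iff v w).1 hvw with ⟨hv, rfl⟩ | h
    · have := R.dist_par hG hv
      omega
    · exact h
  · rintro ⟨hw, rfl⟩
    exact ⟨(R.adj_par hw).symm, R.dist_par hG hw⟩

theorem dist_le_dist_of_le [LinearOrder V] (R : IsParentMap G r par) (hG : G.IsTree)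
    (hr : ∀ u, r ≤ u) (hpar : ∀ u v, u ≠ r → u ≤ v → par u ≤ par v) {u v : V} (huv : u ≤ v) :
    G.dist r u ≤ G.dist r v := by
  refine R.induction (p := fun v => ∀ u, u ≤ v → G.dist r u ≤ G.dist r v) ?_ ?_ v u huv
  · intro u hu
    rw [le_antisymm hu (hr u)]
  · intro v hv ih u huv
    by_cases hu : u = r
    · simp [hu]
    · rw [R.dist_par hG hu, R.dist_par hG hv]
      exact Nat.succ_le_succ (ih _ (hpar u v hu huv))

end IsParentMap

/-- The parent of the vertex `i ≥ 1` when vertices are numbered breadth first and every interior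
vertex has degree `d`: the root `0` has the children `1, …, d`, and each further interior vertex has
`d - 1` children. Truncated subtraction sends vertex `1` to the root as required. -/
def greedyParent (d i : ℕ) : ℕ := (i - 2) / (d - 1)

/-- The neighbours of the interior vertex `i` in the breadth-first numbering, indexed by `t < d`:
index `0` is the parent if `i` is not the root, all other indices are children. -/
def greedyNeighbor (d i t : ℕ) : ℕ :=
  if i ≠ 0 ∧ t = 0 then greedyParent d i else i * (d - 1) + 1 + t

theorem greedyParent_lt {d i : ℕ} (hi : i ≠ 0) : greedyParent d i < i := by
  have : greedyParent d i ≤ i - 2 := Nat.div_le_self _ _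
  omega

theorem greedyParent_mono (d : ℕ) : Monotone (greedyParent d) := fun _ _ h =>
  Nat.div_le_div_right (Nat.sub_le_sub_right h 2)

theorem greedyParent_lt_iff {d i j : ℕ} (hd : 2 ≤ d) (hj : 1 ≤ j) :
    greedyParent d i < j ↔ i < j * (d - 1) + 2 := by
  have : 0 < j * (d - 1) := Nat.mul_pos hj (by omega)
  rw [greedyParent, Nat.div_lt_iff_lt_mul (by omega)]
  omega

theorem greedyParent_eq_iff {d i j : ℕ} (hd : 2 ≤ d) (hi : i ≠ 0) :
    greedyParent d i = j ↔ ∃ t < d, ¬ (j ≠ 0 ∧ t = 0) ∧ i = j * (d - 1) + 1 + t := by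
  have hsucc : (j + 1) * (d - 1) = j * (d - 1) + (d - 1) := Nat.succ_mul _ _
  have hlt := greedyParent_lt_iff (i := i) hd (Nat.succ_pos j)
  rw [Nat.succ_eq_add_one, Nat.lt_succ_iff, hsucc] at hlt
  have hge : j ≤ greedyParent d i ↔ j = 0 ∨ j * (d - 1) + 2 ≤ i := by
    rcases Nat.eq_zero_or_pos j with rfl | hj
    · simp
    · rw [← not_lt, greedyParent_lt_iff hd hj]
      omega
  rw [le_antisymm_iff, hlt, hge]
  constructor
  · rintro ⟨hlt, hge⟩
    have : j = 0 → j * (d - 1) = 0 := by rintro rfl; exact zero_mul _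
    exact ⟨i - (j * (d - 1) + 1), by omega, by omega, by omega⟩
  · rintro ⟨t, ht, hjt, rfl⟩
    omega

/-- The greedy tree with `k` interior vertices `0, …, k - 1`, all of degree `d`, numbered breadth
first. It is the extremal tree of the class `inClassTdInterior d k`. -/
def greedyTree (d k : ℕ) : SimpleGraph (Fin (k * (d - 1) + 2)) where
  Adj i j := (i.1 ≠ 0 ∧ greedyParent d i = j.1) ∨ (j.1 ≠ 0 ∧ greedyParent d j = i.1)
  symm := ⟨fun _ _ h => h.symm⟩
  loopless := ⟨fun _ h => (or_self_iff.1 h).elim fun h0 h => (greedyParent_lt h0).ne h⟩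

theorem isParentMap_greedyTree (d k : ℕ) :
    IsParentMap (greedyTree d k) 0 fun i =>
      ⟨greedyParent d i, ((Nat.div_le_self _ _).trans (Nat.sub_le _ _)).trans_lt i.2⟩ where
  adj_iff u v := by
    simp only [ne_eq, Fin.ext_iff, Fin.val_zero]
    rfl
  exists_height := ⟨Fin.val, fun _ hu => greedyParent_lt (Fin.val_ne_zero_iff.2 hu)⟩

theorem isTree_greedyTree (d k : ℕ) : (greedyTree d k).IsTree :=
  (isParentMap_greedyTree d k).isTree

theorem greedyTree_adj_iff_of_lt {d k : ℕ} {u v : Fin (k * (d - 1) + 2)} (huv : u < v) :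
    (greedyTree d k).Adj u v ↔ greedyParent d v = u := by
  refine ⟨fun h => h.elim (fun h => ?_) And.right, fun h => Or.inr ⟨?_, h⟩⟩
  · exact absurd (h.2.symm.trans_lt (greedyParent_lt h.1)) huv.not_gt
  · exact (Nat.zero_le u.1).trans_lt huv |>.ne'

section
variable {d k : ℕ}

theorem greedyNeighbor_lt (hd : 2 ≤ d) {i t : ℕ} (hi : i < k) (ht : t < d) :
    greedyNeighbor d i t < k * (d - 1) + 2 := by
  have hle : (i + 1) * (d - 1) ≤ k * (d - 1) := Nat.mul_le_mul_right _ hi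
  rw [Nat.succ_mul] at hle
  unfold greedyNeighbor
  split_ifs with h
  · exact (Nat.div_le_self _ _).trans_lt
      (by have := Nat.le_mul_of_pos_right i (show 0 < d - 1 by omega); omega)
  · omega

theorem greedyNeighbor_injOn (hd : 2 ≤ d) (i : ℕ) :
    Set.InjOn (greedyNeighbor d i) (range d) := by
  have hi := Nat.le_mul_of_pos_right i (show 0 < d - 1 by omega)
  have hpar := greedyParent_lt (d := d) (i := i)
  intro s _ t _ hst
  unfold greedyNeighbor at hst
  split_ifs at hst <;> omega

theorem greedyTree_adj_iff (hd : 2 ≤ d) {i w : Fin (k * (d - 1) + 2)} :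
    (greedyTree d k).Adj i w ↔ ∃ t < d, greedyNeighbor d i t = w := by
  constructor
  · rintro (⟨hi, hw⟩ | ⟨hw, hi⟩)
    · exact ⟨0, by omega, by rw [greedyNeighbor, if_pos ⟨hi, rfl⟩, hw]⟩
    · obtain ⟨t, ht, hit, hwt⟩ := (greedyParent_eq_iff hd hw).1 hi
      exact ⟨t, ht, by rw [greedyNeighbor, if_neg hit, hwt]⟩
  · rintro ⟨t, ht, htw⟩
    rw [greedyNeighbor] at htw
    split_ifs at htw with h
    · exact Or.inl ⟨h.1, htw⟩
    · have hw : w.1 ≠ 0 := by omega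
      exact Or.inr ⟨hw, (greedyParent_eq_iff hd hw).2 ⟨t, ht, h, htw.symm⟩⟩

theorem sum_neighborFinset_greedyTree {M : Type*} [AddCommMonoid M] (hd : 2 ≤ d) (B : ℕ → M)
    {i : Fin (k * (d - 1) + 2)} (hi : i.1 < k) :
    ∑ w ∈ (greedyTree d k).neighborFinset i, B w = ∑ t ∈ range d, B (greedyNeighbor d i t) := by
  have himage : (greedyTree d k).neighborFinset i =
      univ.filter fun w => w.1 ∈ (range d).image (greedyNeighbor d i) := by
    ext w
    simp [greedyTree_adj_iff hd]
  rw [himage, ← sum_image (greedyNeighbor_injOn hd i), sum_filter,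
    Fin.sum_univ_eq_sum_range fun w => if w ∈ (range d).image (greedyNeighbor d i) then B w else 0,
    ← sum_filter]
  refine sum_congr (filter_mem_eq_inter.trans (inter_eq_right.2 fun w hw => ?_)) fun _ _ => rfl
  obtain ⟨t, ht, rfl⟩ := mem_image.1 hw
  exact mem_range.2 (greedyNeighbor_lt hd hi (mem_range.1 ht))

theorem degree_greedyTree_of_lt (hd : 2 ≤ d) {i : Fin (k * (d - 1) + 2)} (hi : i.1 < k) :
    (greedyTree d k).degree i = d := by
  simpa using sum_neighborFinset_greedyTree hd (fun _ => (1 : ℕ)) hi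

theorem degree_greedyTree_of_le (hd : 2 ≤ d) (hk : 1 ≤ k) {i : Fin (k * (d - 1) + 2)}
    (hi : k ≤ i.1) : (greedyTree d k).degree i = 1 := by
  have hi0 : i ≠ 0 := fun h => by simp [h] at hi; omega
  have R := isParentMap_greedyTree d k
  refine SimpleGraph.degree_eq_one_iff_existsUnique_adj.2 ⟨_, R.adj_par hi0, fun c hc => ?_⟩
  rcases (R.adj_iff i c).1 hc with ⟨-, h⟩ | ⟨-, rfl⟩
  · exact h.symm
  · exact absurd ((greedyParent_lt_iff hd hk).2 c.2) hi.not_gt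

theorem isInterior_greedyTree_iff (hd : 2 ≤ d) (hk : 1 ≤ k) {i : Fin (k * (d - 1) + 2)} :
    IsInterior (greedyTree d k) i ↔ i.1 < k := by
  refine ⟨fun h => ?_, fun h => hd.trans_eq (degree_greedyTree_of_lt hd h).symm⟩
  by_contra hi
  rw [IsInterior, degree_greedyTree_of_le hd hk (not_lt.1 hi)] at h
  omega

theorem isBoundary_greedyTree_iff (hd : 2 ≤ d) (hk : 1 ≤ k) {i : Fin (k * (d - 1) + 2)} :
    IsBoundary (greedyTree d k) i ↔ k ≤ i.1 := by
  refine ⟨fun h => ?_, degree_greedyTree_of_le hd hk⟩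
  by_contra hi
  rw [IsBoundary, degree_greedyTree_of_lt hd (not_le.1 hi)] at h
  omega

theorem inClassTdInterior_greedyTree (hd : 2 ≤ d) (hk : 1 ≤ k) :
    inClassTdInterior d k (greedyTree d k) := by
  have hkn : k < k * (d - 1) + 2 := by
    have := Nat.le_mul_of_pos_right k (show 0 < d - 1 by omega)
    omega
  refine ⟨⟨isTree_greedyTree d k, ⟨0, (isInterior_greedyTree_iff hd hk).2 hk⟩,
    ⟨k, hkn⟩, (isBoundary_greedyTree_iff hd hk).2 le_rfl⟩, ?_, fun v hv => ?_⟩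
  · simp only [interiorFinset, isInterior_greedyTree_iff hd hk]
    exact Fin.card_filter_val_lt.trans (min_eq_right hkn.le)
  · exact (degree_greedyTree_of_lt hd ((isInterior_greedyTree_iff hd hk).1 hv)).ge

theorem isSLOStarOrdering_greedyTree (hd : 2 ≤ d) (hk : 1 ≤ k) :
    IsSLOStarOrdering (greedyTree d k) 0 (· < ·) := by
  have R := isParentMap_greedyTree d k
  have hT := isTree_greedyTree d k
  refine ⟨⟨inferInstance, fun v w h => ?_, fun v₁ v₂ w₁ w₂ h h₁ h₂ => ?_, fun v w h hv => ?_⟩,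
    fun v w _ hv hw => ?_⟩
  · exact R.dist_le_dist_of_le hT Fin.zero_le (fun u v _ huv => greedyParent_mono d huv) h.le
  · obtain ⟨-, rfl⟩ := (R.isChild_iff hT).1 h₁
    obtain ⟨-, rfl⟩ := (R.isChild_iff hT).1 h₂
    exact (greedyParent_mono d).reflect_lt h
  · rw [isBoundary_greedyTree_iff hd hk] at hv ⊢
    exact hv.trans h.le
  · rw [isInterior_greedyTree_iff hd hk] at hv hw
    rw [degree_greedyTree_of_lt hd hv, degree_greedyTree_of_lt hd hw]

theorem cutSize_greedyTree_le (hd : 2 ≤ d) {a b : ℕ} (hba : b ≤ a) :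
    cutSize (greedyTree d k) b a ≤ (b + 1) * d - (a + b) := by
  have upper_end : ∀ e ∈ (greedyTree d k).interedges {v | v.1 ≤ min b a} {v | max b a < v.1},
      a < e.2.1 ∧ greedyParent d e.2 = e.1 ∧ e.1.1 ≤ b := by
    intro e he
    simp only [SimpleGraph.mem_interedges_iff, mem_filter, mem_univ, true_and, min_eq_left hba,
      max_eq_right hba] at he
    exact ⟨he.2.1, (greedyTree_adj_iff_of_lt (he.1.trans_lt (hba.trans_lt he.2.1))).1 he.2.2, he.1⟩
  have hcard : cutSize (greedyTree d k) b a ≤ #(Ioo a ((b + 1) * (d - 1) + 2)) := by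
    refine card_le_card_of_injOn (fun e => e.2.1) (fun e he => ?_) fun e he e' he' h => ?_
    · obtain ⟨ha, hpar, hb⟩ := upper_end e he
      exact mem_coe.2 <| mem_Ioo.2 ⟨ha,
        (greedyParent_lt_iff hd (Nat.succ_pos b)).1 (Nat.lt_succ_of_le (hpar.trans_le hb))⟩
    · refine Prod.ext (Fin.ext ?_) (Fin.ext h)
      rw [← (upper_end e he).2.1, ← (upper_end e' he').2.1]
      exact congrArg _ h
  have hmul : (b + 1) * d = (b + 1) * (d - 1) + (b + 1) := by
    rw [← Nat.mul_succ, Nat.succ_eq_add_one, Nat.sub_add_cancel (by omega)]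
  rw [Nat.card_Ioo] at hcard
  omega

end

/-! ### Comparison with the greedy tree -/

theorem sum_degree_add_two_le_card_interedges {V : Type*} [Fintype V] [DecidableEq V]
    {G : SimpleGraph V} (hG : G.IsTree) {S T : Finset V} (hS : S.Nonempty) (hST : S ⊆ T) :
    ∑ v ∈ S, G.degree v + 2 ≤ #(G.interedges S Tᶜ) + (#S + #T) := by
  obtain ⟨r, hr⟩ := hS
  obtain ⟨par, R, -⟩ := exists_isParentMap hG r
  have hsplit : ∑ v ∈ S, G.degree v = #(G.interedges S T) + #(G.interedges S Tᶜ) := by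
    rw [card_interedges_eq_sum, card_interedges_eq_sum, ← sum_add_distrib]
    refine sum_congr rfl fun v _ => ?_
    rw [← card_union_of_disjoint (disjoint_filter_filter disjoint_compl_right), ← filter_union,
      union_compl, ← SimpleGraph.card_neighborFinset_eq_degree,
      SimpleGraph.neighborFinset_eq_filter]
  have := R.card_interedges_add_two_le hr (hST hr)
  omega

section
variable {n : ℕ} {G : SimpleGraph (Fin n)}

theorem card_filter_val_le {c : ℕ} (hc : c < n) : #{v : Fin n | v.1 ≤ c} = c + 1 := by
  simp_rw [← Nat.lt_succ_iff]
  exact Fin.card_filter_val_lt.trans (min_eq_right hc)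

theorem sum_degree_add_two_le_cutSize (hG : G.IsTree) {a b : ℕ} (hba : b ≤ a) (ha : a < n) :
    ∑ v : Fin n with v.1 ≤ b, G.degree v + 2 ≤ cutSize G b a + ((b + 1) + (a + 1)) := by
  have hcompl : ({v | v.1 ≤ a} : Finset (Fin n))ᶜ = ({v | a < v.1} : Finset (Fin n)) := by
    ext v; simp
  have h := sum_degree_add_two_le_card_interedges hG (S := {v | v.1 ≤ b}) (T := {v | v.1 ≤ a})
    ⟨⟨b, hba.trans_lt ha⟩, by simp⟩ (monotone_filter_right _ fun v _ (hv : v.1 ≤ b) => hv.trans hba)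
  rw [cutSize, min_eq_left hba, max_eq_right hba]
  rwa [card_filter_val_le ha, card_filter_val_le (hba.trans_lt ha), hcompl] at h

theorem le_cutSize (hG : G.IsTree) {d a b : ℕ} (hdeg : ∀ v : Fin n, v.1 ≤ b → d ≤ G.degree v)
    (hba : b ≤ a) (ha : a < n) : (b + 1) * d - (a + b) ≤ cutSize G b a := by
  have hsum : (b + 1) * d ≤ ∑ v : Fin n with v.1 ≤ b, G.degree v := by
    rw [← card_filter_val_le (hba.trans_lt ha), ← smul_eq_mul]
    exact card_nsmul_le_sum _ _ _ fun v hv => hdeg v (mem_filter.1 hv).2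
  have := sum_degree_add_two_le_cutSize hG hba ha
  omega

theorem cutSize_greedyTree_le_cutSize {d k : ℕ} (hd : 2 ≤ d) (hG : G.IsTree) (hkn : k ≤ n)
    (hdeg : ∀ v : Fin n, v.1 < k → d ≤ G.degree v) {a b : ℕ} (ha : a < k) (hb : b < k) :
    cutSize (greedyTree d k) a b ≤ cutSize G a b := by
  wlog hab : a ≤ b generalizing a b
  · rw [cutSize_comm, cutSize_comm G]
    exact this hb ha (le_of_not_ge hab)
  · exact (cutSize_greedyTree_le hd hab).trans
      (le_cutSize hG (fun v hv => hdeg v (hv.trans_lt ha)) hab (hb.trans_le hkn))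

theorem quadForm_greedyTree_le_quadForm {d k : ℕ} (hd : 2 ≤ d) (hG : G.IsTree) (hkn : k ≤ n)
    (hdeg : ∀ v : Fin n, v.1 < k → d ≤ G.degree v) {φ : ℕ → ℝ} (hφ : Antitone φ)
    (hφ0 : ∀ i, k ≤ i → φ i = 0) :
    quadForm (greedyTree d k) (fun v => φ v) ≤ quadForm G (fun v => φ v) := by
  rw [quadForm_eq_dotProduct, quadForm_eq_dotProduct, dotProduct_lapApply_eq_sum_cutSize _ hφ0 hφ0,
    dotProduct_lapApply_eq_sum_cutSize _ hφ0 hφ0]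
  refine sum_le_sum fun a ha => sum_le_sum fun b hb => ?_
  refine mul_le_mul_of_nonneg_left (Nat.cast_le.2 ?_)
    (mul_nonneg (sub_nonneg.2 (hφ a.le_succ)) (sub_nonneg.2 (hφ b.le_succ)))
  exact cutSize_greedyTree_le_cutSize hd hG hkn hdeg (mem_range.1 ha) (mem_range.1 hb)

end

/-! ### Labelling by decreasing eigenfunction -/

/-- `φ` is the first Dirichlet eigenfunction of a tree on `Fin n` with `k` interior vertices,
labelled so that `φ` is decreasing. It is extended by zero to all indices, so that it can be
evaluated at the labels of another graph. -/
structure IsSortedEigenfunction {n : ℕ} (G : SimpleGraph (Fin n)) (k : ℕ) (φ : ℕ → ℝ) : Prop where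
  antitone : Antitone φ
  pos : ∀ i, i < k → 0 < φ i
  eq_zero : ∀ i, k ≤ i → φ i = 0
  isInterior_iff : ∀ v, IsInterior G v ↔ v.1 < k
  isDirichletEigenpair : IsDirichletEigenpair G (dirichletLambda G) fun v => φ v

theorem mem_iff_lt_card_of_isLowerSet {n : ℕ} {s : Finset (Fin n)}
    (hs : IsLowerSet (s : Set (Fin n))) (v : Fin n) : v ∈ s ↔ v.1 < #s := by
  constructor <;> intro h
  · have : Iic v ⊆ s := fun w hw => hs (mem_Iic.1 hw) h
    simpa [Fin.card_Iic] using card_le_card this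
  · by_contra hv
    have : s ⊆ Iio v := fun w hw => mem_Iio.2 (not_le.1 fun hvw => hv (hs hvw hw))
    have := card_le_card this
    rw [Fin.card_Iio] at this
    omega

theorem exists_equiv_antitone {V : Type*} [Fintype V] (f : V → ℝ) :
    ∃ e : Fin (Fintype.card V) ≃ V, Antitone (f ∘ e) := by
  set e₀ := Fintype.equivFin V
  refine ⟨(Tuple.sort (-f ∘ e₀.symm)).trans e₀.symm, fun i j hij => neg_le_neg_iff.1 ?_⟩
  exact Tuple.monotone_sort (-f ∘ e₀.symm) hij

/-- The extension by zero of a function on `Fin n`. -/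
def zeroExtend {n : ℕ} (g : Fin n → ℝ) (i : ℕ) : ℝ := if h : i < n then g ⟨i, h⟩ else 0

theorem zeroExtend_val {n : ℕ} (g : Fin n → ℝ) (v : Fin n) : zeroExtend g v = g v :=
  dif_pos v.2

theorem antitone_zeroExtend {n : ℕ} {g : Fin n → ℝ} (hg : Antitone g) (hg0 : 0 ≤ g) :
    Antitone (zeroExtend g) := by
  intro i j hij
  unfold zeroExtend
  split_ifs with hj hi hi
  · exact hg (Fin.mk_le_mk.2 hij)
  · omega
  · exact hg0 _
  · exact le_rfl

theorem exists_isSortedEigenfunction {V : Type*} [Fintype V] {G : SimpleGraph V}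
    (hG : IsTreeWithBoundary G) :
    ∃ (n : ℕ) (G' : SimpleGraph (Fin n)) (φ : ℕ → ℝ),
      Nonempty (G ≃g G') ∧ IsSortedEigenfunction G' #(interiorFinset G) φ := by
  have hcases := hG.isBoundary_or_isInterior
  obtain ⟨-, f, hf0, hf⟩ := exists_nonneg_first_eigenfunction hcases hG.2.1
  obtain ⟨e, he⟩ := exists_equiv_antitone f
  set ι : G.comap e ≃g G := SimpleGraph.Iso.comap e G
  have pos_iff : ∀ v, 0 < f (e v) ↔ IsInterior G (e v) := by
    refine fun v => ⟨fun h => (hcases (e v)).resolve_left fun hb => h.ne' (hf.2.1 _ hb), ?_⟩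
    exact hf.pos_of_nonneg hG.1.connected hf0
  have interior_eq : ∀ v, IsInterior G (e v) ↔ v.1 < #(interiorFinset G) := by
    intro v
    set s : Finset (Fin (Fintype.card V)) := univ.filter fun v => IsInterior G (e v) with hs
    have mem_s : ∀ v, v ∈ s ↔ 0 < f (e v) := by simp [hs, pos_iff]
    have hcard : #s = #(interiorFinset G) := card_equiv e fun v => by simp [hs, interiorFinset]
    have hlower : IsLowerSet (s : Set (Fin (Fintype.card V))) := fun v w hwv hv =>
      (mem_s w).2 (((mem_s v).1 hv).trans_le (he hwv))
    rw [← hcard, ← mem_iff_lt_card_of_isLowerSet hlower, mem_s, pos_iff]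
  refine ⟨_, G.comap e, zeroExtend (f ∘ e), ⟨ι.symm⟩,
    antitone_zeroExtend he fun v => hf0 (e v), fun i hi => ?_, fun i hi => ?_, fun v => ?_, ?_⟩
  · have hin : i < Fintype.card V := hi.trans_le (card_le_univ _)
    rw [zeroExtend, dif_pos hin]
    exact (pos_iff _).2 ((interior_eq ⟨i, hin⟩).2 hi)
  · unfold zeroExtend
    split_ifs with hin
    · refine le_antisymm (not_lt.1 fun h => ?_) (hf0 _)
      exact hi.not_gt ((interior_eq ⟨i, hin⟩).1 ((pos_iff _).1 h))
    · rfl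
  · rw [← interior_eq, ← isInterior_iso_iff ι]
    rfl
  · simp_rw [zeroExtend_val, dirichletLambda_iso ι]
    exact hf.comp_iso ι

/-! ### The case of equality -/

section
variable {d k n : ℕ} {G : SimpleGraph (Fin n)} {φ : ℕ → ℝ}

theorem sum_fin_eq_sum_range {M : Type*} [AddCommMonoid M] {ψ : ℕ → M} (hkn : k ≤ n)
    (hψ : ∀ i, k ≤ i → ψ i = 0) : ∑ v : Fin n, ψ v = ∑ i ∈ range k, ψ i := by
  rw [Fin.sum_univ_eq_sum_range]
  refine (sum_subset (range_subset_range.2 hkn) fun i _ hi => hψ i ?_).symm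
  simpa using hi

theorem le_greedyTree_card (hd : 2 ≤ d) : k ≤ k * (d - 1) + 2 :=
  (Nat.le_mul_of_pos_right k (by omega)).trans (Nat.le_add_right _ _)

theorem mem_dirichletSpace_greedyTree (hd : 2 ≤ d) (hk : 1 ≤ k) (hφ : ∀ i, k ≤ i → φ i = 0) :
    (fun v : Fin (k * (d - 1) + 2) => φ v) ∈ dirichletSpace (greedyTree d k) :=
  fun v hv => hφ v ((isBoundary_greedyTree_iff hd hk).1 hv)

theorem dirichletLambda_greedyTree_mul_le (hd : 2 ≤ d) (hk : 1 ≤ k)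
    (hφ : ∀ i, k ≤ i → φ i = 0) :
    dirichletLambda (greedyTree d k) * ∑ i ∈ range k, φ i * φ i ≤
      quadForm (greedyTree d k) fun v => φ v := by
  have hC := (inClassTdInterior_greedyTree hd hk).1
  rw [← sum_fin_eq_sum_range (ψ := fun i => φ i * φ i) (le_greedyTree_card hd)
    fun i hi => by simp [hφ i hi]]
  exact (exists_nonneg_first_eigenfunction hC.isBoundary_or_isInterior hC.2.1).1 _
    (mem_dirichletSpace_greedyTree hd hk hφ)

namespace IsSortedEigenfunction

theorem le_card (hφ : IsSortedEigenfunction G k φ) (hG : IsTreeWithBoundary G) : k ≤ n := by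
  obtain ⟨-, -, v, hv⟩ := hG
  have : ¬ v.1 < k := fun h => ((hφ.isInterior_iff v).2 h).not_isBoundary hv
  omega

theorem quadForm_eq (hφ : IsSortedEigenfunction G k φ) (hG : IsTreeWithBoundary G) :
    quadForm G (fun v => φ v) = dirichletLambda G * ∑ i ∈ range k, φ i * φ i := by
  rw [hφ.isDirichletEigenpair.quadForm_eq hG.isBoundary_or_isInterior,
    ← sum_fin_eq_sum_range (ψ := fun i => φ i * φ i) (hφ.le_card hG)
      fun i hi => by simp [hφ.eq_zero i hi]]
  rfl

theorem sum_mul_self_pos (hφ : IsSortedEigenfunction G k φ) (hk : 1 ≤ k) :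
    0 < ∑ i ∈ range k, φ i * φ i :=
  sum_pos (fun i hi => mul_self_pos.2 (hφ.pos i (mem_range.1 hi)).ne')
    ⟨0, mem_range.2 hk⟩

theorem le_degree (hφ : IsSortedEigenfunction G k φ) (hG : inClassTdInterior d k G) (v : Fin n)
    (hv : v.1 < k) : d ≤ G.degree v :=
  hG.2.2 v ((hφ.isInterior_iff v).2 hv)

theorem quadForm_greedyTree_le (hφ : IsSortedEigenfunction G k φ) (hd : 2 ≤ d)
    (hG : inClassTdInterior d k G) :
    quadForm (greedyTree d k) (fun v => φ v) ≤ quadForm G (fun v => φ v) :=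
  quadForm_greedyTree_le_quadForm hd hG.1.1 (hφ.le_card hG.1) (hφ.le_degree hG) hφ.antitone
    hφ.eq_zero

theorem dirichletLambda_greedyTree_le (hφ : IsSortedEigenfunction G k φ) (hd : 2 ≤ d)
    (hk : 1 ≤ k) (hG : inClassTdInterior d k G) :
    dirichletLambda (greedyTree d k) ≤ dirichletLambda G := by
  refine le_of_mul_le_mul_right ?_ (hφ.sum_mul_self_pos hk)
  rw [← hφ.quadForm_eq hG.1]
  exact (dirichletLambda_greedyTree_mul_le hd hk hφ.eq_zero).trans (hφ.quadForm_greedyTree_le hd hG)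

theorem quadForm_le_of_dirichletLambda_le (hφ : IsSortedEigenfunction G k φ) (hd : 2 ≤ d)
    (hk : 1 ≤ k) (hG : inClassTdInterior d k G)
    (hle : dirichletLambda G ≤ dirichletLambda (greedyTree d k)) :
    quadForm G (fun v => φ v) ≤ quadForm (greedyTree d k) fun v => φ v := by
  rw [hφ.quadForm_eq hG.1]
  exact (mul_le_mul_of_nonneg_right hle (hφ.sum_mul_self_pos hk).le).trans
    (dirichletLambda_greedyTree_mul_le hd hk hφ.eq_zero)

theorem cutSize_eq (hφ : IsSortedEigenfunction G k φ) (hd : 2 ≤ d) (hG : inClassTdInterior d k G)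
    (hle : quadForm G (fun v => φ v) ≤ quadForm (greedyTree d k) fun v => φ v) {a b : ℕ}
    (ha : a < k) (hb : b < k) (hφa : φ a ≠ φ (a + 1)) (hφb : φ b ≠ φ (b + 1)) :
    cutSize (greedyTree d k) a b = cutSize G a b := by
  have heq := (hφ.quadForm_greedyTree_le hd hG).antisymm hle
  rw [quadForm_eq_dotProduct, quadForm_eq_dotProduct,
    dotProduct_lapApply_eq_sum_cutSize _ hφ.eq_zero hφ.eq_zero,
    dotProduct_lapApply_eq_sum_cutSize _ hφ.eq_zero hφ.eq_zero] at heq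
  have hterm : ∀ a ∈ range k, ∀ b ∈ range k,
      (φ a - φ (a + 1)) * (φ b - φ (b + 1)) * cutSize (greedyTree d k) a b ≤
        (φ a - φ (a + 1)) * (φ b - φ (b + 1)) * cutSize G a b := fun a ha b hb =>
    mul_le_mul_of_nonneg_left (Nat.cast_le.2 (cutSize_greedyTree_le_cutSize hd hG.1.1
      (hφ.le_card hG.1) (hφ.le_degree hG) (mem_range.1 ha) (mem_range.1 hb)))
      (mul_nonneg (sub_nonneg.2 (hφ.antitone a.le_succ)) (sub_nonneg.2 (hφ.antitone b.le_succ)))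
  have hrow := (sum_eq_sum_iff_of_le fun a ha => sum_le_sum (hterm a ha)).1 heq a (mem_range.2 ha)
  have hentry := (sum_eq_sum_iff_of_le (hterm a (mem_range.2 ha))).1 hrow b (mem_range.2 hb)
  exact Nat.cast_injective <|
    mul_left_cancel₀ (mul_ne_zero (sub_ne_zero.2 hφa) (sub_ne_zero.2 hφb)) hentry

theorem degree_eq (hφ : IsSortedEigenfunction G k φ) (hd : 2 ≤ d) (hG : inClassTdInterior d k G)
    (hle : quadForm G (fun v => φ v) ≤ quadForm (greedyTree d k) fun v => φ v) {v : Fin n}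
    (hv : IsInterior G v) : G.degree v = d := by
  obtain ⟨m, rfl⟩ : ∃ m, k = m + 1 := ⟨k - 1, by have := (hφ.isInterior_iff v).1 hv; omega⟩
  have hjump : φ m ≠ φ (m + 1) := by
    rw [hφ.eq_zero _ le_rfl]
    exact (hφ.pos m m.lt_succ_self).ne'
  have hm : m < n := hφ.le_card hG.1
  have hcut := cutSize_greedyTree_le (k := m + 1) hd (le_refl m)
  rw [hφ.cutSize_eq hd hG hle m.lt_succ_self m.lt_succ_self hjump hjump] at hcut
  have hsum := sum_degree_add_two_le_cutSize hG.1.1 le_rfl hm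
  have hdm : (m + 1) * 2 ≤ (m + 1) * d := Nat.mul_le_mul_left _ hd
  have hconst : ∑ v : Fin n with v.1 ≤ m, d = (m + 1) * d := by
    rw [sum_const, card_filter_val_le hm, smul_eq_mul]
  have hdeg : ∀ v ∈ ({v | v.1 ≤ m} : Finset (Fin n)), d ≤ G.degree v := fun v hv =>
    hφ.le_degree hG v (Nat.lt_succ_of_le (mem_filter.1 hv).2)
  refine ((sum_eq_sum_iff_of_le hdeg).1 (le_antisymm (sum_le_sum hdeg) ?_) v ?_).symm
  · omega
  · simpa [Nat.lt_succ_iff] using (hφ.isInterior_iff v).1 hv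

theorem dotProduct_lapApply_comp_eq (hφ : IsSortedEigenfunction G k φ) (hd : 2 ≤ d)
    (hG : inClassTdInterior d k G)
    (hle : quadForm G (fun v => φ v) ≤ quadForm (greedyTree d k) fun v => φ v) {A : ℝ → ℝ}
    (hA : A 0 = 0) (B : ℝ → ℝ) :
    (fun v : Fin n => A (φ v)) ⬝ᵥ lapApply G (fun v => B (φ v)) =
      (fun v : Fin (k * (d - 1) + 2) => A (φ v)) ⬝ᵥ
        lapApply (greedyTree d k) fun v => B (φ v) := by
  wlog hB : B 0 = 0 generalizing B
  · simpa only [lapApply_sub_const] using this (fun x => B x - B 0) (sub_self _)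
  have comp_eq_zero : ∀ {A : ℝ → ℝ}, A 0 = 0 → ∀ i, k ≤ i → A (φ i) = 0 := fun hA i hi => by
    rw [hφ.eq_zero i hi, hA]
  rw [dotProduct_lapApply_eq_sum_cutSize _ (comp_eq_zero hA) (comp_eq_zero hB),
    dotProduct_lapApply_eq_sum_cutSize _ (comp_eq_zero hA) (comp_eq_zero hB)]
  refine sum_congr rfl fun a ha => sum_congr rfl fun b hb => ?_
  by_cases hφa : φ a = φ (a + 1)
  · simp [← hφa]
  by_cases hφb : φ b = φ (b + 1)
  · simp [← hφb]
  rw [hφ.cutSize_eq hd hG hle (mem_range.1 ha) (mem_range.1 hb) hφa hφb]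

end IsSortedEigenfunction

theorem sum_mul_sum_neighborFinset (hkn : k ≤ n) (hdeg : ∀ v : Fin n, v.1 < k → G.degree v = d)
    {ψ : ℕ → ℝ} (hψ : ∀ i, k ≤ i → ψ i = 0) (χ : ℕ → ℝ) :
    ∑ v : Fin n, ψ v * ∑ w ∈ G.neighborFinset v, χ w =
      d * ∑ i ∈ range k, ψ i * χ i - (fun v : Fin n => ψ v) ⬝ᵥ lapApply G (fun v => χ v) := by
  rw [← sum_fin_eq_sum_range (ψ := fun i => ψ i * χ i) hkn fun i hi => by simp [hψ i hi],
    dotProduct, mul_sum, ← sum_sub_distrib]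
  refine sum_congr rfl fun v _ => ?_
  rcases lt_or_ge v.1 k with hv | hv
  · rw [lapApply, hdeg v hv]
    ring
  · simp [hψ v hv]

theorem IsSortedEigenfunction.sum_neighborFinset_eq_of_level (hφ : IsSortedEigenfunction G k φ)
    (hd : 2 ≤ d) (hG : inClassTdInterior d k G)
    (hle : quadForm G (fun v => φ v) ≤ quadForm (greedyTree d k) fun v => φ v) {c : ℝ}
    (hc : c ≠ 0) (B : ℝ → ℝ) :
    ∑ v : Fin n with φ v.1 = c, ∑ w ∈ G.neighborFinset v, B (φ w) =
      ∑ i ∈ range k with φ i = c, ∑ t ∈ range d, B (φ (greedyNeighbor d i t)) := by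
  set A : ℝ → ℝ := fun x => if x = c then 1 else 0
  have hA : ∀ i, k ≤ i → A (φ i) = 0 := fun i hi => by
    rw [hφ.eq_zero i hi]
    exact if_neg hc.symm
  have hdeg : ∀ v : Fin n, v.1 < k → G.degree v = d := fun v hv =>
    hφ.degree_eq hd hG hle ((hφ.isInterior_iff v).2 hv)
  have key : ∑ v : Fin n, A (φ v) * ∑ w ∈ G.neighborFinset v, B (φ w) =
      ∑ i ∈ range k, A (φ i) * ∑ t ∈ range d, B (φ (greedyNeighbor d i t)) := by
    rw [sum_mul_sum_neighborFinset (hφ.le_card hG.1) hdeg hA fun i => B (φ i),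
      hφ.dotProduct_lapApply_comp_eq hd hG hle (A := A) (if_neg hc.symm) B,
      ← sum_mul_sum_neighborFinset (le_greedyTree_card hd)
        (fun v hv => degree_greedyTree_of_lt hd hv) hA fun i => B (φ i),
      ← sum_fin_eq_sum_range (le_greedyTree_card hd) fun i hi => by rw [hA i hi, zero_mul]]
    refine sum_congr rfl fun v _ => ?_
    rcases lt_or_ge v.1 k with hv | hv
    · rw [sum_neighborFinset_greedyTree hd (fun i => B (φ i)) hv]
    · rw [hA v hv, zero_mul, zero_mul]
  simpa only [A, ite_mul, one_mul, zero_mul, ← sum_filter] using key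

end

/-! ### Local colour profiles -/

theorem sum_comp_eq_of_two_values {ι : Type*} {s : Finset ι} {f : ι → ℝ} {y z : ℝ} {m : ℕ}
    (hf : ∀ i ∈ s, f i = z ∨ f i = y) (hcard : #s = m + 1) (hsum : ∑ i ∈ s, f i = z + m * y)
    (B : ℝ → ℝ) : ∑ i ∈ s, B (f i) = B z + m * B y := by
  obtain ⟨β, hβ⟩ : ∃ β, B z - B y = β * (z - y) := by
    rcases eq_or_ne z y with rfl | hzy
    · exact ⟨0, by simp⟩
    · exact ⟨_, (div_mul_cancel₀ _ (sub_ne_zero.2 hzy)).symm⟩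
  have affine : ∀ i ∈ s, B (f i) = (B y - β * y) + β * f i := by
    intro i hi
    rcases hf i hi with h | h <;> rw [h]
    · linarith
    · ring
  rw [sum_congr rfl affine, sum_add_distrib, ← mul_sum, hsum, sum_const, hcard, nsmul_eq_mul]
  push_cast
  linarith

section
variable {d k n : ℕ} {G : SimpleGraph (Fin n)} {φ : ℕ → ℝ}

theorem greedyNeighbor_eq_of_tie {μ : ℝ} (hd : 1 ≤ d) (hφ : Antitone φ)
    (heig : ∀ i < k, ∑ t ∈ range d, φ (greedyNeighbor d i t) = μ * φ i) {i j : ℕ} (hij : i < j)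
    (hj : j < k) (htie : φ i = φ j) :
    φ (greedyNeighbor d i 0) = φ (greedyNeighbor d j 0) ∧
      ∀ s ∈ Ico 1 d, ∀ t ∈ Ico 1 d, φ (greedyNeighbor d i s) = φ (greedyNeighbor d j t) := by
  have child_le : ∀ s ∈ Ico 1 d, ∀ t ∈ Ico 1 d,
      φ (greedyNeighbor d j t) ≤ φ (greedyNeighbor d i s) := by
    intro s hs t ht
    have hmul : (i + 1) * (d - 1) ≤ j * (d - 1) := Nat.mul_le_mul_right _ hij
    rw [mem_Ico] at hs ht
    rw [Nat.succ_mul] at hmul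
    rw [greedyNeighbor, if_neg (by omega), greedyNeighbor, if_neg (by omega)]
    exact hφ (by omega)
  have parent_le : φ (greedyNeighbor d j 0) ≤ φ (greedyNeighbor d i 0) := by
    rw [greedyNeighbor, if_pos ⟨by omega, rfl⟩, greedyNeighbor]
    split_ifs with hi
    · exact hφ (greedyParent_mono d hij.le)
    · obtain rfl : i = 0 := by omega
      have := hφ (Nat.zero_le (greedyParent d j))
      have := hφ (show 0 * (d - 1) + 1 + 0 ≤ j by omega)
      linarith
  have term_le : ∀ t ∈ range d, φ (greedyNeighbor d j t) ≤ φ (greedyNeighbor d i t) := by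
    intro t ht
    rcases Nat.eq_zero_or_pos t with rfl | ht0
    · exact parent_le
    · have := mem_Ico.2 ⟨ht0, mem_range.1 ht⟩
      exact child_le t this t this
  have term_eq := (sum_eq_sum_iff_of_le term_le).1 <| by
    rw [heig i (hij.trans hj), heig j hj, htie]
  refine ⟨(term_eq 0 (mem_range.2 hd)).symm, fun s hs t ht => le_antisymm ?_ (child_le s hs t ht)⟩
  rw [← term_eq s (mem_range.2 (mem_Ico.1 hs).2)]
  exact (child_le t ht s hs).trans_eq (term_eq t (mem_range.2 (mem_Ico.1 ht).2)).symm

theorem exists_greedyNeighbor_eq_of_tie {μ : ℝ} (hd : 1 ≤ d) (hφ : Antitone φ)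
    (heig : ∀ i < k, ∑ t ∈ range d, φ (greedyNeighbor d i t) = μ * φ i) {i j : ℕ} (hi : i < k)
    (hj : j < k) (hij : i ≠ j) (htie : φ i = φ j) :
    ∃ z y, ∀ a < k, φ a = φ i → φ (greedyNeighbor d a 0) = z ∧
      ∀ t ∈ Ico 1 d, φ (greedyNeighbor d a t) = y := by
  have tie : ∀ a < k, ∀ b < k, φ a = φ b → a ≠ b →
      φ (greedyNeighbor d a 0) = φ (greedyNeighbor d b 0) ∧
        ∀ s ∈ Ico 1 d, ∀ t ∈ Ico 1 d, φ (greedyNeighbor d a s) = φ (greedyNeighbor d b t) := by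
    intro a ha b hb hab hne
    rcases lt_or_gt_of_ne hne with hlt | hlt
    · exact greedyNeighbor_eq_of_tie hd hφ heig hlt hb hab
    · have h := greedyNeighbor_eq_of_tie hd hφ heig hlt ha hab.symm
      exact ⟨h.1.symm, fun s hs t ht => (h.2 t ht s hs).symm⟩
  refine ⟨φ (greedyNeighbor d i 0), φ (greedyNeighbor d i 1), fun a ha hai => ?_⟩
  by_cases hne : a = i
  · subst hne
    refine ⟨rfl, fun t ht => ?_⟩
    have h1 : 1 ∈ Ico 1 d := mem_Ico.2 ⟨le_rfl, by have := mem_Ico.1 ht; omega⟩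
    have h := (tie a ha j hj htie hij).2
    exact (h t ht 1 h1).trans (h 1 h1 1 h1).symm
  · obtain ⟨hparent, hchild⟩ := tie a ha i hi hai hne
    exact ⟨hparent, fun t ht => hchild t ht 1 (mem_Ico.2 ⟨le_rfl, by
      have := mem_Ico.1 ht
      omega⟩)⟩

theorem sum_greedyNeighbor_of_eq {i : ℕ} {y z : ℝ} (hd : 1 ≤ d)
    (hz : φ (greedyNeighbor d i 0) = z) (hy : ∀ t ∈ Ico 1 d, φ (greedyNeighbor d i t) = y)
    (B : ℝ → ℝ) :
    ∑ t ∈ range d, B (φ (greedyNeighbor d i t)) = B z + (d - 1 : ℕ) * B y := by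
  rw [range_eq_Ico, sum_eq_sum_Ico_succ_bot (by omega), hz,
    sum_congr rfl fun t ht => by rw [hy t ht], sum_const, Nat.card_Ico, nsmul_eq_mul]

/-- The test function `B x = (x - z)² (x - y)²` detects that no other values occur. -/
theorem eq_or_eq_of_sum_neighborFinset_eq {c y z : ℝ} (hd : 1 ≤ d)
    (hC : ∀ i < k, φ i = c → φ (greedyNeighbor d i 0) = z ∧
      ∀ t ∈ Ico 1 d, φ (greedyNeighbor d i t) = y)
    (hlevel : ∀ B : ℝ → ℝ, ∑ v : Fin n with φ v.1 = c, ∑ w ∈ G.neighborFinset v, B (φ w) =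
      ∑ i ∈ range k with φ i = c, ∑ t ∈ range d, B (φ (greedyNeighbor d i t)))
    {v w : Fin n} (hv : φ v = c) (hvw : G.Adj v w) : φ w = z ∨ φ w = y := by
  set B : ℝ → ℝ := fun x => (x - z) ^ 2 * (x - y) ^ 2
  have hB : ∀ x, 0 ≤ B x := fun x => by positivity
  have hzero : ∑ v : Fin n with φ v.1 = c, ∑ w ∈ G.neighborFinset v, B (φ w) = 0 := by
    rw [hlevel]
    refine sum_eq_zero fun i hi => ?_
    obtain ⟨hik, hic⟩ := mem_filter.1 hi
    obtain ⟨hz, hy⟩ := hC i (mem_range.1 hik) hic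
    rw [sum_greedyNeighbor_of_eq hd hz hy]
    simp [B]
  have hv0 := (sum_eq_zero_iff_of_nonneg fun v _ => sum_nonneg fun w _ => hB _).1 hzero v
    (by simpa using hv)
  have hw0 := (sum_eq_zero_iff_of_nonneg fun w _ => hB _).1 hv0 w
    ((G.mem_neighborFinset v w).2 hvw)
  simpa [B, sub_eq_zero] using hw0

theorem sum_neighborFinset_eq_of_unique {i : ℕ} {v : Fin n} (hi : i < k)
    (hv : φ v = φ i) (hzero : ∀ j, k ≤ j → φ j = 0) (hi0 : φ i ≠ 0)
    (hunique : ∀ j < k, φ j = φ i → j = i) {B : ℝ → ℝ}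
    (hlevel : ∑ v : Fin n with φ v.1 = φ i, ∑ w ∈ G.neighborFinset v, B (φ w) =
      ∑ j ∈ range k with φ j = φ i, ∑ t ∈ range d, B (φ (greedyNeighbor d j t))) :
    ∑ w ∈ G.neighborFinset v, B (φ w) = ∑ t ∈ range d, B (φ (greedyNeighbor d i t)) := by
  have level_eq : ∀ j, φ j = φ i ↔ j = i := fun j => by
    refine ⟨fun h => hunique j (not_le.1 fun hj => hi0 (h ▸ hzero j hj)) h, fun h => h ▸ rfl⟩
  obtain rfl := (level_eq v).1 hv
  simpa only [level_eq, ← Fin.ext_iff, sum_filter, sum_ite_eq', mem_univ, mem_range, hi,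
    if_true] using hlevel

theorem IsSortedEigenfunction.sum_neighborFinset_eq_of_tie (hφ : IsSortedEigenfunction G k φ)
    (hd : 1 ≤ d) {μ : ℝ} (hdeg : ∀ v : Fin n, v.1 < k → G.degree v = d)
    (hG : ∀ v : Fin n, v.1 < k → ∑ w ∈ G.neighborFinset v, φ w = μ * φ v)
    (heig : ∀ i < k, ∑ t ∈ range d, φ (greedyNeighbor d i t) = μ * φ i) {i j : ℕ} {v : Fin n}
    (hi : i < k) (hv : φ v = φ i) (hj : j < k) (hij : i ≠ j) (htie : φ i = φ j)
    (hlevel : ∀ B : ℝ → ℝ, ∑ v : Fin n with φ v.1 = φ i, ∑ w ∈ G.neighborFinset v, B (φ w) =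
      ∑ j ∈ range k with φ j = φ i, ∑ t ∈ range d, B (φ (greedyNeighbor d j t)))
    (B : ℝ → ℝ) :
    ∑ w ∈ G.neighborFinset v, B (φ w) = ∑ t ∈ range d, B (φ (greedyNeighbor d i t)) := by
  have hvk : v.1 < k := not_le.1 fun h => (hφ.pos i hi).ne' (hv ▸ hφ.eq_zero v h)
  obtain ⟨z, y, hC⟩ := exists_greedyNeighbor_eq_of_tie hd hφ.antitone heig hi hj hij htie
  have greedy_sum := sum_greedyNeighbor_of_eq hd (hC i hi rfl).1 (hC i hi rfl).2
  have values : ∀ w ∈ G.neighborFinset v, φ w = z ∨ φ w = y := fun w hw =>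
    eq_or_eq_of_sum_neighborFinset_eq hd hC hlevel hv ((G.mem_neighborFinset v w).1 hw)
  rw [greedy_sum]
  refine sum_comp_eq_of_two_values values ?_ ?_ B
  · rw [SimpleGraph.card_neighborFinset_eq_degree, hdeg v hvk]
    omega
  · rw [hG v hvk, hv, ← heig i hi]
    exact greedy_sum id

theorem sum_neighborFinset_of_lapApply_eq {V : Type*} [Fintype V] {G : SimpleGraph V} {f : V → ℝ}
    {μ : ℝ} {v : V} (h : lapApply G f v = μ * f v) :
    ∑ w ∈ G.neighborFinset v, f w = (G.degree v - μ) * f v := by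
  rw [lapApply] at h
  linarith

theorem IsSortedEigenfunction.sum_greedyNeighbor_eq (hφ : IsSortedEigenfunction G k φ) (hd : 2 ≤ d)
    (hk : 1 ≤ k) (hG : inClassTdInterior d k G)
    (hle : dirichletLambda G ≤ dirichletLambda (greedyTree d k)) {i : ℕ} (hi : i < k) :
    ∑ t ∈ range d, φ (greedyNeighbor d i t) = (d - dirichletLambda G) * φ i := by
  have hC := (inClassTdInterior_greedyTree hd hk).1
  have hmin := (exists_nonneg_first_eigenfunction hC.isBoundary_or_isInterior hC.2.1).1
  rw [hle.antisymm (hφ.dirichletLambda_greedyTree_le hd hk hG)]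
  set v : Fin (k * (d - 1) + 2) := ⟨i, hi.trans_le (le_greedyTree_card hd)⟩
  have hquad : quadForm (greedyTree d k) (fun v => φ v) ≤ dirichletLambda (greedyTree d k) *
      ((fun v : Fin (k * (d - 1) + 2) => φ v) ⬝ᵥ fun v => φ v) := by
    rw [dotProduct, sum_fin_eq_sum_range (ψ := fun i => φ i * φ i) (le_greedyTree_card hd)
      fun i hi => by simp [hφ.eq_zero i hi]]
    refine (hφ.quadForm_greedyTree_le hd hG).trans ?_
    rw [hφ.quadForm_eq hG.1]
    exact mul_le_mul_of_nonneg_right hle (hφ.sum_mul_self_pos hk).le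
  have hlap := sum_neighborFinset_of_lapApply_eq <| lapApply_eq_of_quadForm_le hmin
    (mem_dirichletSpace_greedyTree hd hk hφ.eq_zero) hquad
    (v := v) ((isInterior_greedyTree_iff hd hk).2 hi)
  rwa [sum_neighborFinset_greedyTree hd φ hi, degree_greedyTree_of_lt hd hi] at hlap

theorem IsSortedEigenfunction.sum_neighborFinset_eq (hφ : IsSortedEigenfunction G k φ) (hd : 2 ≤ d)
    (hk : 1 ≤ k) (hG : inClassTdInterior d k G)
    (hle : dirichletLambda G ≤ dirichletLambda (greedyTree d k)) {i : ℕ} (hi : i < k) {v : Fin n}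
    (hv : φ v = φ i) (B : ℝ → ℝ) :
    ∑ w ∈ G.neighborFinset v, B (φ w) = ∑ t ∈ range d, B (φ (greedyNeighbor d i t)) := by
  have hquad := hφ.quadForm_le_of_dirichletLambda_le hd hk hG hle
  have hlevel := hφ.sum_neighborFinset_eq_of_level hd hG hquad (hφ.pos i hi).ne'
  by_cases hunique : ∀ j < k, φ j = φ i → j = i
  · exact sum_neighborFinset_eq_of_unique hi hv hφ.eq_zero (hφ.pos i hi).ne' hunique (hlevel B)
  · push Not at hunique
    obtain ⟨j, hj, htie, hji⟩ := hunique
    have hdeg : ∀ v : Fin n, v.1 < k → G.degree v = d := fun v hv =>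
      hφ.degree_eq hd hG hquad ((hφ.isInterior_iff v).2 hv)
    refine hφ.sum_neighborFinset_eq_of_tie (by omega) hdeg (fun u hu => ?_)
      (fun a ha => hφ.sum_greedyNeighbor_eq hd hk hG hle ha) hi hv hj hji.symm htie.symm hlevel B
    rw [← hdeg u hu]
    exact sum_neighborFinset_of_lapApply_eq
      (hφ.isDirichletEigenpair.2.2 u ((hφ.isInterior_iff u).2 hu))

end

/-! ### Reconstructing a tree from its local colour profiles -/

/-- A colour- and parent-preserving embedding `σ` of the first `m` vertices of a tree on `Fin N`,
rooted at `0`, into another rooted tree; `f` and `φ` are the colourings. The values of `σ` at the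
other vertices are irrelevant. -/
structure IsPrefixEmbedding {V α : Type*} {N : ℕ} [NeZero N] (r : V) (par : V → V)
    (par' : Fin N → Fin N) (f : V → α) (φ : Fin N → α) (m : ℕ) (σ : Fin N → V) : Prop where
  map_zero : σ 0 = r
  color : ∀ i, i.1 < m → f (σ i) = φ i
  injOn : ∀ i j, i.1 < m → j.1 < m → σ i = σ j → i = j
  map_par : ∀ i, i.1 < m → i ≠ 0 → par (σ i) = σ (par' i)

namespace IsPrefixEmbedding

variable {V α : Type*} {N : ℕ} [NeZero N] {G : SimpleGraph V} {r : V} {par : V → V}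
  {H : SimpleGraph (Fin N)} {par' : Fin N → Fin N} {f : V → α} {φ : Fin N → α} {m : ℕ}
  {σ : Fin N → V}

theorem adj_of_adj (E : IsPrefixEmbedding r par par' f φ m σ) (R : IsParentMap G r par)
    (R' : IsParentMap H 0 par') (hlt : ∀ i, i ≠ 0 → par' i < i) {i j : Fin N} (hi : i.1 < m)
    (hj : j.1 < m) (hij : G.Adj (σ i) (σ j)) : H.Adj i j := by
  have par_eq : ∀ {i j : Fin N}, i.1 < m → j.1 < m → σ i ≠ r ∧ par (σ i) = σ j →
      i ≠ 0 ∧ par' i = j := by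
    rintro i j hi hj ⟨hir, hpar⟩
    have hi0 : i ≠ 0 := fun h => hir (h ▸ E.map_zero)
    rw [E.map_par i hi hi0] at hpar
    exact ⟨hi0, E.injOn _ _ ((Fin.lt_def.1 (hlt i hi0)).trans hi) hj hpar⟩
  exact (R'.adj_iff i j).2 (((R.adj_iff _ _).1 hij).imp (par_eq hi hj) (par_eq hj hi))

theorem exists_fresh_neighbor [Fintype V] (R : IsParentMap G r par) (R' : IsParentMap H 0 par')
    (hlt : ∀ i, i ≠ 0 → par' i < i) {m : Fin N} (hm : m ≠ 0)
    (E : IsPrefixEmbedding r par par' f φ m σ)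
    (hcard : #{w ∈ G.neighborFinset (σ (par' m)) | f w = φ m} =
      #{i ∈ H.neighborFinset (par' m) | φ i = φ m}) :
    ∃ w, G.Adj (σ (par' m)) w ∧ f w = φ m ∧ ∀ i < m, σ i ≠ w := by
  by_contra! hused
  have hsub : {w ∈ G.neighborFinset (σ (par' m)) | f w = φ m} ⊆
      ({i ∈ H.neighborFinset (par' m) | φ i = φ m}.erase m).image σ := by
    intro w hw
    simp only [mem_filter, SimpleGraph.mem_neighborFinset] at hw
    obtain ⟨i, him, rfl⟩ := hused w hw.1 hw.2
    refine mem_image_of_mem σ (mem_erase.2 ⟨him.ne, mem_filter.2 ⟨?_, ?_⟩⟩)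
    · exact (H.mem_neighborFinset _ _).2 (E.adj_of_adj R R' hlt (hlt m hm) him hw.1)
    · rw [← E.color i him, hw.2]
  have hmem : m ∈ {i ∈ H.neighborFinset (par' m) | φ i = φ m} :=
    mem_filter.2 ⟨(H.mem_neighborFinset _ _).2 (R'.adj_par hm).symm, rfl⟩
  exact ((card_le_card hsub).trans card_image_le).not_gt
    ((card_erase_lt_of_mem hmem).trans_eq hcard.symm)

theorem exists_succ [Fintype V] (R : IsParentMap G r par) (R' : IsParentMap H 0 par')
    (hlt : ∀ i, i ≠ 0 → par' i < i) {m : Fin N} (hm : m ≠ 0)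
    (E : IsPrefixEmbedding r par par' f φ m σ)
    (hcard : #{w ∈ G.neighborFinset (σ (par' m)) | f w = φ m} =
      #{i ∈ H.neighborFinset (par' m) | φ i = φ m}) :
    ∃ σ', IsPrefixEmbedding r par par' f φ (m + 1) σ' := by
  obtain ⟨w, hadj, hcolor, hfresh⟩ := exists_fresh_neighbor R R' hlt hm E hcard
  have hjm := hlt m hm
  have hpar : par w = σ (par' m) := by
    refine (((R.adj_iff _ _).1 hadj).resolve_left fun ⟨hne, hw⟩ => ?_).2
    have hj0 : par' m ≠ 0 := fun h => hne (h ▸ E.map_zero)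
    exact hfresh _ ((hlt _ hj0).trans hjm) ((E.map_par _ hjm hj0).symm.trans hw)
  have hold : ∀ {i}, i < m → Function.update σ m w i = σ i := fun h =>
    Function.update_of_ne h.ne _ _
  have hnew : Function.update σ m w m = w := Function.update_self _ _ _
  have lt_or_eq : ∀ i : Fin N, i.1 < m + 1 → i < m ∨ i = m := fun i hi =>
    (Fin.le_def.2 (Nat.lt_succ_iff.1 hi)).lt_or_eq
  refine ⟨Function.update σ m w, ?_, fun i hi => ?_, fun i j hi hj => ?_, fun i hi hi0 => ?_⟩
  · rw [hold (Fin.pos_iff_ne_zero.2 hm), E.map_zero]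
  · rcases lt_or_eq i hi with h | rfl
    · rw [hold h, E.color i h]
    · rw [hnew, hcolor]
  · rcases lt_or_eq i hi with h | rfl <;> rcases lt_or_eq j hj with h' | rfl
    · rw [hold h, hold h']
      exact E.injOn i j h h'
    · rw [hold h, hnew]
      exact fun heq => absurd heq (hfresh i h)
    · rw [hold h', hnew]
      exact fun heq => absurd heq.symm (hfresh j h')
    · exact fun _ => rfl
  · rcases lt_or_eq i hi with h | rfl
    · rw [hold h, hold ((hlt i hi0).trans h), E.map_par i h hi0]
    · rw [hnew, hold hjm, hpar]

end IsPrefixEmbedding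

/-- The isomorphism is built greedily, one vertex of `H` at a time. -/
theorem IsParentMap.nonempty_iso_of_local_colors {V α : Type*} [Fintype V] {N : ℕ} [NeZero N]
    {G : SimpleGraph V} {r : V} {par : V → V} {H : SimpleGraph (Fin N)} {par' : Fin N → Fin N}
    {f : V → α} {φ : Fin N → α} (R : IsParentMap G r par) (R' : IsParentMap H 0 par')
    (hlt : ∀ i, i ≠ 0 → par' i < i) (hV : Fintype.card V = N) (hr : f r = φ 0)
    (hlocal : ∀ i, i ≠ 0 → ∀ v, f v = φ (par' i) →
      #{w ∈ G.neighborFinset v | f w = φ i} = #{j ∈ H.neighborFinset (par' i) | φ j = φ i}) :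
    Nonempty (G ≃g H) := by
  have exists_prefix : ∀ m, 1 ≤ m → m ≤ N → ∃ σ, IsPrefixEmbedding r par par' f φ m σ := by
    intro m hm
    induction m, hm using Nat.le_induction with
    | base =>
      have eq_zero : ∀ i : Fin N, i.1 < 1 → i = 0 := fun i hi => Fin.ext (Nat.lt_one_iff.1 hi)
      refine fun _ => ⟨fun _ => r, rfl, fun i hi => ?_, fun i j hi hj _ => ?_, fun i hi hi0 => ?_⟩
      · rw [eq_zero i hi, hr]
      · rw [eq_zero i hi, eq_zero j hj]
      · exact absurd (eq_zero i hi) hi0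
    | succ m hm ih =>
      intro hmN
      obtain ⟨σ, E⟩ := ih (by omega)
      have hm0 : (⟨m, hmN⟩ : Fin N) ≠ 0 := fun h => by
        have := congrArg Fin.val h
        simp at this
        omega
      exact IsPrefixEmbedding.exists_succ R R' hlt (m := ⟨m, hmN⟩) hm0 E
        (hlocal _ hm0 _ (E.color _ (hlt _ hm0)))
  obtain ⟨σ, E⟩ := exists_prefix N (NeZero.one_le) le_rfl
  have hinj : Function.Injective σ := fun i j hij => E.injOn i j i.2 j.2 hij
  refine R.nonempty_iso R' ((Fintype.bijective_iff_injective_and_card σ).2 ⟨hinj, ?_⟩) E.map_zero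
    fun i hi => E.map_par i i.2 hi
  rw [hV, Fintype.card_fin]

theorem card_of_degree_eq {V : Type*} [Fintype V] {d k : ℕ} {G : SimpleGraph V} (hd : 2 ≤ d)
    (hG : IsTreeWithBoundary G) (hk : #(interiorFinset G) = k)
    (hdeg : ∀ v, IsInterior G v → G.degree v = d) : Fintype.card V = k * (d - 1) + 2 := by
  have hsum : ∑ v, G.degree v = k * d + (Fintype.card V - k) := by
    have hinterior : ∀ v ∈ interiorFinset G, G.degree v = d := fun v hv =>
      hdeg v (mem_filter.1 hv).2
    have hboundary : ∀ v ∈ (interiorFinset G)ᶜ, G.degree v = 1 := fun v hv =>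
      (hG.isBoundary_or_isInterior v).resolve_right fun h => by simp [interiorFinset, h] at hv
    rw [← sum_add_sum_compl (interiorFinset G), sum_congr rfl hinterior, sum_congr rfl hboundary,
      sum_const, sum_const, card_compl, hk, smul_eq_mul, smul_eq_mul, mul_one]
  have hle : k ≤ Fintype.card V := hk ▸ card_le_univ _
  have hedges := hG.1.card_edgeFinset
  rw [G.sum_degrees_eq_twice_card_edges] at hsum
  have hmul : k * d = k * (d - 1) + k := by rw [← Nat.mul_succ, Nat.succ_eq_add_one,
    Nat.sub_add_cancel (by omega)]
  omega

theorem IsSortedEigenfunction.nonempty_iso_greedyTree {d k n : ℕ} {G : SimpleGraph (Fin n)}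
    {φ : ℕ → ℝ} (hφ : IsSortedEigenfunction G k φ) (hd : 2 ≤ d) (hk : 1 ≤ k)
    (hG : inClassTdInterior d k G)
    (hle : dirichletLambda G ≤ dirichletLambda (greedyTree d k)) :
    Nonempty (G ≃g greedyTree d k) := by
  have hcard := card_of_degree_eq hd hG.1 hG.2.1 fun v =>
    hφ.degree_eq hd hG (hφ.quadForm_le_of_dirichletLambda_le hd hk hG hle)
  have hn : 0 < n := hk.trans (hφ.le_card hG.1)
  obtain ⟨par, R, -⟩ := exists_isParentMap hG.1.1 ⟨0, hn⟩
  refine R.nonempty_iso_of_local_colors (f := fun v => φ v) (φ := fun i => φ i)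
    (isParentMap_greedyTree d k) (fun i hi => greedyParent_lt (Fin.val_ne_zero_iff.2 hi)) hcard rfl
    fun i hi v hv => ?_
  have hparent : greedyParent d i < k := (greedyParent_lt_iff hd hk).2 i.2
  have hprofile := hφ.sum_neighborFinset_eq hd hk hG hle hparent hv
    fun x => if x = φ i then 1 else 0
  have hgreedy := sum_neighborFinset_greedyTree hd (fun j => if φ j = φ i then (1 : ℝ) else 0)
    (i := ⟨greedyParent d i, (greedyParent_lt (Fin.val_ne_zero_iff.2 hi)).trans i.2⟩) hparent
  rw [← hgreedy] at hprofile
  simpa only [sum_boole, Nat.cast_inj] using hprofile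

/-! ### Spiral-like orderings of trees with constant interior degree -/

theorem exists_equiv_fin_lt_iff {V : Type*} [Fintype V] {lt : V → V → Prop}
    (hlt : IsStrictTotalOrder V lt) :
    ∃ σ : Fin (Fintype.card V) ≃ V, ∀ i j, lt (σ i) (σ j) ↔ i < j := by
  let _ : LinearOrder V := linearOrderOfSTO lt
  let σ := Fintype.orderIsoFinOfCardEq V rfl
  exact ⟨σ.toEquiv, fun i j => σ.lt_iff_lt⟩

theorem IsSLOOrdering.par_le_par {V : Type*} [Fintype V] [LinearOrder V] {G : SimpleGraph V}
    {r : V} {par : V → V} (hS : IsSLOOrdering G r (· < ·)) (hG : G.IsTree)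
    (R : IsParentMap G r par) {u v : V} (hu : u ≠ r) (hv : v ≠ r) (huv : u ≤ v) :
    par u ≤ par v := by
  by_contra hlt
  exact huv.not_gt <| hS.2.2.1 _ _ v u (not_le.1 hlt) ((R.isChild_iff hG).2 ⟨hv, rfl⟩)
    ((R.isChild_iff hG).2 ⟨hu, rfl⟩)

section

variable {n : ℕ} {G : SimpleGraph (Fin n)} {r : Fin n}

theorem IsSLOOrdering.root_eq_zero [NeZero n] (hS : IsSLOOrdering G r (· < ·))
    (hG : G.Connected) : r = 0 := by
  by_contra hr
  have hdist := hS.2.1 0 r (Fin.pos_iff_ne_zero.2 hr)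
  rw [SimpleGraph.dist_self, Nat.le_zero] at hdist
  exact hr (hG.dist_eq_zero_iff.1 hdist)

theorem IsSLOOrdering.isInterior_iff (hS : IsSLOOrdering G r (· < ·))
    (hG : IsTreeWithBoundary G) {v : Fin n} :
    IsInterior G v ↔ v.1 < #(interiorFinset G) := by
  rw [← mem_iff_lt_card_of_isLowerSet]
  · simp only [interiorFinset, mem_filter, mem_univ, true_and]
  · intro v w hwv hv
    simp only [interiorFinset, coe_filter, mem_univ, true_and, Set.mem_ofPred_eq] at hv ⊢
    rcases hwv.eq_or_lt with rfl | hwv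
    · exact hv
    · exact (hG.isBoundary_or_isInterior w).resolve_left fun hw =>
        hv.not_isBoundary (hS.2.2.2 w v hwv hw)

/-- Up to the root, the children of the vertices `0, …, b` form an initial segment, whose length is
determined by the degrees. -/
theorem IsParentMap.par_val_le_iff [NeZero n] {par : Fin n → Fin n} (R : IsParentMap G 0 par)
    (hpar : ∀ u v, u ≠ 0 → u ≤ v → par u ≤ par v) {b d : ℕ} (hb : b < n) (hd : 1 ≤ d)
    (hdeg : ∀ v, v.1 ≤ b → G.degree v = d) {c : Fin n} (hc : c ≠ 0) :
    (par c).1 ≤ b ↔ c.1 < (b + 1) * (d - 1) + 2 := by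
  let S : Finset (Fin n) := {v | v.1 ≤ b}
  let children : Finset (Fin n) := {c | c ≠ 0 ∧ par c ∈ S}
  have mem_children : ∀ v, v ∈ children ↔ v ≠ 0 ∧ (par v).1 ≤ b := by simp [children, S]
  have hcard : #children + 1 = (b + 1) * (d - 1) + 2 := by
    have hcount : #children + #S = ∑ v ∈ S, G.degree v + 1 :=
      R.card_children_add_card (by simp [S])
    rw [card_filter_val_le hb, sum_congr rfl fun v hv => hdeg v (mem_filter.1 hv).2, sum_const,
      card_filter_val_le hb, smul_eq_mul] at hcount
    have hmul : (b + 1) * d = (b + 1) * (d - 1) + (b + 1) := by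
      rw [← Nat.mul_succ, Nat.succ_eq_add_one, Nat.sub_add_cancel hd]
    omega
  have hlower : IsLowerSet ((insert 0 children : Finset (Fin n)) : Set (Fin n)) := by
    intro v w hwv hv
    rw [mem_coe, mem_insert, mem_children] at hv ⊢
    refine or_iff_not_imp_left.2 fun hw => ⟨hw, ?_⟩
    have hv0 : v ≠ 0 := fun h => hw (nonpos_iff_eq_zero.1 (h ▸ hwv))
    exact (Fin.le_def.1 (hpar w v hw hwv)).trans (hv.resolve_left hv0).2
  have hmem := mem_iff_lt_card_of_isLowerSet hlower c
  rw [card_insert_of_notMem (by simp [mem_children]), hcard] at hmem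
  simpa [hc, mem_children] using hmem

theorem IsSLOOrdering.nonempty_iso_greedyTree {d k : ℕ} (hS : IsSLOOrdering G r (· < ·))
    (hd : 2 ≤ d) (hk : 1 ≤ k) (hG : IsTreeWithBoundary G) (hcard : #(interiorFinset G) = k)
    (hdeg : ∀ v, IsInterior G v → G.degree v = d) : Nonempty (G ≃g greedyTree d k) := by
  obtain rfl : n = k * (d - 1) + 2 := by
    rw [← card_of_degree_eq hd hG hcard hdeg, Fintype.card_fin]
  obtain rfl := hS.root_eq_zero hG.1.connected
  obtain ⟨par, R, -⟩ := exists_isParentMap hG.1 0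
  have hmono : ∀ u v, u ≠ 0 → u ≤ v → par u ≤ par v := fun u v hu huv =>
    hS.par_le_par hG.1 R hu (fun h => hu (nonpos_iff_eq_zero.1 (h ▸ huv))) huv
  have hpar_le : ∀ c, c ≠ 0 → ∀ b < k, (par c).1 ≤ b ↔ greedyParent d c ≤ b := by
    intro c hc b hb
    rw [← Nat.lt_succ_iff (m := greedyParent d c), greedyParent_lt_iff hd b.succ_pos]
    exact R.par_val_le_iff hmono (hb.trans_le (le_greedyTree_card hd)) (by omega)
      (fun v hv => hdeg v ((hS.isInterior_iff hG).2 (by omega))) hc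
  refine R.nonempty_iso (isParentMap_greedyTree d k) Function.bijective_id rfl fun c hc => ?_
  have hlt : greedyParent d c < k := (greedyParent_lt_iff hd hk).2 c.2
  have hle : (par c).1 ≤ greedyParent d c := (hpar_le c hc _ hlt).2 le_rfl
  exact Fin.ext (hle.antisymm ((hpar_le c hc _ (hle.trans_lt hlt)).1 le_rfl))

end

theorem IsSLOStarTree.nonempty_iso_greedyTree {V : Type*} [Fintype V] {d k : ℕ}
    {G : SimpleGraph V} (hS : IsSLOStarTree G) (hd : 2 ≤ d) (hk : 1 ≤ k)
    (hcard : #(interiorFinset G) = k) (hdeg : ∀ v, IsInterior G v → G.degree v = d) :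
    Nonempty (G ≃g greedyTree d k) := by
  obtain ⟨hG, r, lt, hlt⟩ := hS
  obtain ⟨σ, hσ⟩ := exists_equiv_fin_lt_iff hlt.1.1
  let e : G.comap σ ≃g G := SimpleGraph.Iso.comap σ G
  have hG' := hG.of_iso e.symm
  have hclass := inClassTdInterior_of_iso e.symm
    ⟨hG, hcard, fun v hv => (hdeg v hv).ge⟩
  have hSLO := (hlt.comp_iso hG'.1.connected e).1
  rw [show (fun a b => lt (e a) (e b)) = (· < ·) from funext₂ fun a b => propext (hσ a b)] at hSLO
  obtain ⟨i⟩ := hSLO.nonempty_iso_greedyTree hd hk hG' hclass.2.1 fun v hv =>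
    (e.degree_eq v).symm.trans (hdeg _ ((isInterior_iso_iff e v).2 hv))
  exact ⟨e.symm.trans i⟩

/-! ### The Faber-Krahn property -/

section

variable {V : Type*} [Fintype V] {G : SimpleGraph V} {d k : ℕ}

theorem hasFKTdInterior_iff_nonempty_iso_greedyTree [DecidableEq V] (hd : 2 ≤ d) (hk : 1 ≤ k)
    (hG : inClassTdInterior d k G) :
    hasFKTdInterior d k G ↔ Nonempty (G ≃g greedyTree d k) := by
  constructor
  · rintro ⟨-, hmin⟩
    obtain ⟨n, G', φ, ⟨e⟩, hφ⟩ := exists_isSortedEigenfunction hG.1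
    rw [hG.2.1] at hφ
    have hle := hmin _ _ (inClassTdInterior_greedyTree hd hk)
    rw [dirichletLambda_iso e] at hle
    obtain ⟨i⟩ := hφ.nonempty_iso_greedyTree hd hk (inClassTdInterior_of_iso e hG) hle
    exact ⟨e.trans i⟩
  · rintro ⟨i⟩
    refine ⟨hG, fun m H hH => ?_⟩
    obtain ⟨n, H', φ, ⟨e⟩, hφ⟩ := exists_isSortedEigenfunction hH.1
    rw [hH.2.1] at hφ
    rw [dirichletLambda_iso i, dirichletLambda_iso e]
    exact hφ.dirichletLambda_greedyTree_le hd hk (inClassTdInterior_of_iso e hH)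

theorem isSLOStarTree_of_iso_greedyTree (hd : 2 ≤ d) (hk : 1 ≤ k) (e : G ≃g greedyTree d k) :
    IsSLOStarTree G := by
  have hG := (inClassTdInterior_greedyTree hd hk).1.of_iso e.symm
  exact ⟨hG, _, _, (isSLOStarOrdering_greedyTree hd hk).comp_iso hG.1.connected e⟩

theorem degree_eq_of_iso_greedyTree (hd : 2 ≤ d) (hk : 1 ≤ k) (e : G ≃g greedyTree d k) {v : V}
    (hv : IsInterior G v) : G.degree v = d := by
  rw [← e.degree_eq v]
  exact degree_greedyTree_of_lt hd <|
    (isInterior_greedyTree_iff hd hk).1 ((isInterior_iso_iff e v).2 hv)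

end

/-- **Theorem.** A tree `G` has the Faber-Krahn property in `T_d^(·,k)` if and
only if it is an SLO*-tree in which every interior vertex has degree exactly
`d`; `G` is then uniquely determined up to isomorphism. -/
theorem faberKrahn_TdInterior (d k : ℕ) (hd : 2 ≤ d) (hk : 1 ≤ k)
    {V : Type} [Fintype V] [DecidableEq V]
    (G : SimpleGraph V) (hG : inClassTdInterior d k G) :
    (hasFKTdInterior d k G ↔
      (IsSLOStarTree G ∧ ∀ v, IsInterior G v → G.degree v = d)) ∧
    (hasFKTdInterior d k G →
      ∀ (m : ℕ) (G' : SimpleGraph (Fin m)), hasFKTdInterior d k G' →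
        Nonempty (G ≃g G')) := by
  have hiso := hasFKTdInterior_iff_nonempty_iso_greedyTree hd hk hG
  refine ⟨⟨fun hFK => ?_, fun ⟨hSLO, hdeg⟩ => ?_⟩, fun hFK m G' hFK' => ?_⟩
  · obtain ⟨e⟩ := hiso.1 hFK
    exact ⟨isSLOStarTree_of_iso_greedyTree hd hk e,
      fun _ hv => degree_eq_of_iso_greedyTree hd hk e hv⟩
  · exact hiso.2 (hSLO.nonempty_iso_greedyTree hd hk hG.2.1 hdeg)
  · obtain ⟨e⟩ := hiso.1 hFK
    obtain ⟨e'⟩ := (hasFKTdInterior_iff_nonempty_iso_greedyTree hd hk hFK'.1).1 hFK'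
    exact ⟨e.trans e'.symm⟩

end FK
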